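/- arXiv:2309.15042 — 2 statements merged into one kernel-verified Lean document; each statement's English description precedes it below -/
import Mathlib

section
/- Fix 0 < p < 1. The set {f ∈ V_p : for every q > 0, sup_{0<r<1} (1/(2π)) ∫_{−π}^{π} |Im f(r e^{iθ})|^q dθ = ∞} — i.e., the set of u ∈ h^p whose normalized harmonic conjugate ũ belongs to no h^q with q > 0 — is a G_δ and dense subset of the metric space (V_p, δ_p). -/
open Complex Set Metric

noncomputable section

/-- `N_p`-mean of a real function on the circle of radius `r`:
`(1/2π) ∫_{-π}^{π} |u(r e^{iθ})|^p dθ`. -/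
def circMeanR (p : ℝ) (u : ℂ → ℝ) (r : ℝ) : ℝ :=
  (1 / (2 * Real.pi)) * ∫ θ in (-Real.pi)..Real.pi,
    |u ((r : ℂ) * Complex.exp ((θ : ℂ) * Complex.I))| ^ p

/-- The space `h^p` (for a fixed `p`), identified with the holomorphic functions
`f = u + i ũ` with `Im f(0) = 0` and `Re f ∈ h^p`. -/
def HarmVp (p : ℝ) : Type :=
  {f : ℂ → ℂ // DifferentiableOn ℂ f (Metric.ball (0 : ℂ) 1) ∧ (f 0).im = 0 ∧
    ∃ C : ℝ, ∀ r ∈ Set.Ioo (0 : ℝ) 1, circMeanR p (fun z => (f z).re) r ≤ C}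

/-- The translation-invariant metric `δ_p(f,g) = N_p(Re(f-g))` on `h^p`. -/
def harmDistP (p : ℝ) (f g : HarmVp p) : ℝ :=
  ⨆ r : Set.Ioo (0 : ℝ) 1, circMeanR p (fun z => (f.1 z - g.1 z).re) r

/-- The topology induced by a distance function via its open balls. -/
def ballTopology {α : Type*} (d : α → α → ℝ) : TopologicalSpace α :=
  TopologicalSpace.generateFrom {U | ∃ x ε, 0 < ε ∧ U = {y | d x y < ε}}

/-!
The Schwarz formula, applied on a circle slightly beyond a maximum point of `(R - |z|) |f| ^ p`,
shows that `δ_p`-convergence implies locally uniform convergence of `f`, so each circle mean of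
`Im f` is continuous on `h^p`. As the means for a smaller exponent are controlled by those for a
larger one, the set is a countable intersection of the open sets
`{f | some circle mean of order 1 / (n + 1) of Im f exceeds m}`.

For density it is enough to find a single `h` in the set: if `Im f` lies in some `h^q`, then
`f + t h` lies in the set for every real `t ≠ 0`, and it tends to `f` as `t → 0`.

Such an `h` is `∑ ± w_j / (1 - w_j ^ 2)` with `w_j = z ^ 2 ^ j` and suitable signs. By Kolmogorov's
estimate the `p`-mean of the real part of the `j`-th term on the circle of radius `r` is
`O((r ^ 2 ^ j) ^ p * (1 - (r ^ 2 ^ j) ^ 2) ^ (p * (1 - p)))`, which is dominated by a telescoping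
sequence in `j`; hence `Re h ∈ h^p` for all signs. The terms do not tend to zero on the unit circle,
so by Khinchine's inequality, whatever finitely many signs are prescribed, the others can be chosen
to make some `q`-mean of `Im h` as large as one likes. Baire's theorem on the space of signs then
yields signs that work for all `q` at once.
-/

open Filter Topology

/-! ### Circle means -/

lemma circMeanR_eq_circleAverage (q : ℝ) (u : ℂ → ℝ) (r : ℝ) :
    circMeanR q u r = Real.circleAverage (fun z => |u z| ^ q) 0 r := by
  rw [Real.circleAverage_eq_integral_add (-Real.pi),
    intervalIntegral.integral_comp_add_right (fun θ => |u (circleMap 0 r θ)| ^ q), circMeanR,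
    smul_eq_mul, one_div, zero_add, show 2 * Real.pi + -Real.pi = Real.pi by ring]
  simp only [circleMap, zero_add]

lemma norm_circleAverage_le {E : Type*} [NormedAddCommGroup E] [NormedSpace ℝ E] (F : ℂ → E)
    (c : ℂ) (R : ℝ) :
    ‖Real.circleAverage F c R‖ ≤ Real.circleAverage (fun z => ‖F z‖) c R := by
  rw [Real.circleAverage_def, Real.circleAverage_def, norm_smul, smul_eq_mul, Real.norm_eq_abs,
    abs_of_pos (inv_pos.2 Real.two_pi_pos)]
  gcongr
  exact intervalIntegral.norm_integral_le_integral_norm Real.two_pi_pos.le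

lemma sphere_abs_subset_unitBall {r : ℝ} (hr : r ∈ Ioo (0 : ℝ) 1) :
    sphere (0 : ℂ) |r| ⊆ ball 0 1 :=
  sphere_subset_ball ((abs_of_pos hr.1).trans_lt hr.2)

lemma diffContOnCl_ball_of_lt_one {f : ℂ → ℂ} (hf : DifferentiableOn ℂ f (ball 0 1)) {r : ℝ}
    (hr : r < 1) : DiffContOnCl ℂ f (ball 0 r) :=
  (hf.mono (closure_ball_subset_closedBall.trans (closedBall_subset_ball hr))).diffContOnCl

section CircleMeans

variable {q r : ℝ} {u v : ℂ → ℝ}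

lemma circleIntegrable_abs_rpow (hq : 0 ≤ q) (hu : ContinuousOn u (sphere 0 |r|)) :
    CircleIntegrable (fun z => |u z| ^ q) 0 r :=
  (hu.abs.rpow_const fun _ _ => Or.inr hq).circleIntegrable'

lemma circMeanR_nonneg (q : ℝ) (u : ℂ → ℝ) (r : ℝ) : 0 ≤ circMeanR q u r := by
  rw [circMeanR_eq_circleAverage]
  exact Real.circleAverage_nonneg_of_nonneg fun _ _ => by positivity

lemma circMeanR_const_mul (q t : ℝ) (u : ℂ → ℝ) (r : ℝ) :
    circMeanR q (fun z => t * u z) r = |t| ^ q * circMeanR q u r := by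
  simp only [circMeanR_eq_circleAverage, abs_mul, Real.mul_rpow (abs_nonneg _) (abs_nonneg _)]
  exact Real.circleAverage_fun_smul (a := |t| ^ q) (f := fun z => |u z| ^ q)

lemma circMeanR_add_le (hq : 0 ≤ q) (hq1 : q ≤ 1) (hu : ContinuousOn u (sphere 0 |r|))
    (hv : ContinuousOn v (sphere 0 |r|)) :
    circMeanR q (fun z => u z + v z) r ≤ circMeanR q u r + circMeanR q v r := by
  have hu' := circleIntegrable_abs_rpow hq hu
  have hv' := circleIntegrable_abs_rpow hq hv
  simp only [circMeanR_eq_circleAverage]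
  rw [← Real.circleAverage_fun_add hu' hv']
  refine Real.circleAverage_mono (circleIntegrable_abs_rpow hq (hu.add hv)) (hu'.add hv')
    fun z _ => ?_
  calc |u z + v z| ^ q ≤ (|u z| + |v z|) ^ q := by gcongr; exact abs_add_le _ _
    _ ≤ |u z| ^ q + |v z| ^ q := Real.rpow_add_le_add_rpow (abs_nonneg _) (abs_nonneg _) hq hq1

lemma circMeanR_sum_le {ι : Type*} {s : Finset ι} {w : ι → ℂ → ℝ} (hq : 0 < q) (hq1 : q ≤ 1)
    (hw : ∀ i ∈ s, ContinuousOn (w i) (sphere 0 |r|)) :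
    circMeanR q (fun z => ∑ i ∈ s, w i z) r ≤ ∑ i ∈ s, circMeanR q (w i) r := by
  classical
  induction s using Finset.induction_on with
  | empty => simp [circMeanR, Real.zero_rpow hq.ne']
  | insert i s hi ih =>
    simp only [Finset.sum_insert hi]
    have hs : ∀ j ∈ s, ContinuousOn (w j) (sphere 0 |r|) := fun j hj =>
      hw j (Finset.mem_insert_of_mem hj)
    exact (circMeanR_add_le hq.le hq1 (hw i (Finset.mem_insert_self i s))
      (continuousOn_finsetSum _ hs)).trans (by gcongr; exact ih hs)

lemma abs_circMeanR_sub_le (hq : 0 ≤ q) (hq1 : q ≤ 1) (hu : ContinuousOn u (sphere 0 |r|))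
    (hv : ContinuousOn v (sphere 0 |r|)) :
    |circMeanR q u r - circMeanR q v r| ≤ circMeanR q (fun z => u z - v z) r := by
  have hsymm : circMeanR q (fun z => v z - u z) r = circMeanR q (fun z => u z - v z) r := by
    simp only [circMeanR, abs_sub_comm]
  have h₁ := circMeanR_add_le hq hq1 hv (hu.fun_sub hv)
  have h₂ := circMeanR_add_le hq hq1 hu (hv.fun_sub hu)
  simp only [add_sub_cancel] at h₁ h₂
  rw [abs_sub_le_iff]
  constructor <;> linarith

lemma circMeanR_le_one_add_circMeanR {q' : ℝ} (hq : 0 ≤ q) (hqq' : q ≤ q')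
    (hu : ContinuousOn u (sphere 0 |r|)) :
    circMeanR q u r ≤ 1 + circMeanR q' u r := by
  have hu' := circleIntegrable_abs_rpow (hq.trans hqq') hu
  simp only [circMeanR_eq_circleAverage]
  rw [← Real.circleAverage_const (1 : ℝ) (0 : ℂ) r,
    ← Real.circleAverage_fun_add (circleIntegrable_const _ _ _) hu']
  refine Real.circleAverage_mono (circleIntegrable_abs_rpow hq hu)
    ((circleIntegrable_const _ _ _).add hu') fun z _ => ?_
  rcases le_total |u z| 1 with hle | hge
  · exact (Real.rpow_le_one (abs_nonneg _) hle hq).trans (le_add_of_nonneg_right (by positivity))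
  · exact (Real.rpow_le_rpow_of_exponent_le hge hqq').trans (le_add_of_nonneg_left zero_le_one)

lemma circMeanR_le_rpow_of_forall_abs_le {η : ℝ} (hq : 0 ≤ q)
    (hu : ContinuousOn u (sphere 0 |r|)) (h : ∀ z ∈ sphere (0 : ℂ) |r|, |u z| ≤ η) :
    circMeanR q u r ≤ η ^ q := by
  rw [circMeanR_eq_circleAverage]
  exact Real.circleAverage_mono_on_of_le_circle (circleIntegrable_abs_rpow hq hu)
    fun z hz => Real.rpow_le_rpow (abs_nonneg _) (h z hz) hq

end CircleMeans

/-! ### Hardy spaces of real functions -/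

/-- Membership `u ∈ h^q` in the harmonic Hardy space, for a real function `u` on the disc whose
harmonicity is recorded elsewhere. -/
def HardyBounded (q : ℝ) (u : ℂ → ℝ) : Prop :=
  ∃ C : ℝ, ∀ r ∈ Ioo (0 : ℝ) 1, circMeanR q u r ≤ C

/-- The quantity `N_q(u)`; it has the junk value `0` when `u ∉ h^q`. -/
def hardySup (q : ℝ) (u : ℂ → ℝ) : ℝ :=
  ⨆ r : Ioo (0 : ℝ) 1, circMeanR q u r

section HardySpace

variable {q : ℝ} {u v : ℂ → ℝ}

lemma HardyBounded.circMeanR_le_hardySup (h : HardyBounded q u) {r : ℝ}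
    (hr : r ∈ Ioo (0 : ℝ) 1) : circMeanR q u r ≤ hardySup q u := by
  obtain ⟨C, hC⟩ := h
  exact le_ciSup (f := fun r : Ioo (0 : ℝ) 1 => circMeanR q u r)
    ⟨C, by rintro _ ⟨r, rfl⟩; exact hC r r.2⟩ ⟨r, hr⟩

lemma hardySup_le {C : ℝ} (h : ∀ r ∈ Ioo (0 : ℝ) 1, circMeanR q u r ≤ C) : hardySup q u ≤ C :=
  have : Nonempty (Ioo (0 : ℝ) 1) := ⟨⟨1 / 2, by norm_num, by norm_num⟩⟩
  ciSup_le fun s => h s s.2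

lemma hardySup_const_mul (q t : ℝ) (u : ℂ → ℝ) :
    hardySup q (fun z => t * u z) = |t| ^ q * hardySup q u := by
  simp only [hardySup, circMeanR_const_mul]
  exact (Real.mul_iSup_of_nonneg (by positivity) _).symm

lemma HardyBounded.const_mul (h : HardyBounded q u) (t : ℝ) :
    HardyBounded q (fun z => t * u z) := by
  obtain ⟨C, hC⟩ := h
  refine ⟨|t| ^ q * C, fun r hr => ?_⟩
  rw [circMeanR_const_mul]
  gcongr
  exact hC r hr

lemma HardyBounded.add (hu : HardyBounded q u) (hv : HardyBounded q v) (hq : 0 ≤ q) (hq1 : q ≤ 1)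
    (huc : ContinuousOn u (ball 0 1)) (hvc : ContinuousOn v (ball 0 1)) :
    HardyBounded q (fun z => u z + v z) := by
  obtain ⟨C, hC⟩ := hu
  obtain ⟨D, hD⟩ := hv
  refine ⟨C + D, fun r hr => ?_⟩
  have hsub := sphere_abs_subset_unitBall hr
  exact (circMeanR_add_le hq hq1 (huc.mono hsub) (hvc.mono hsub)).trans
    (add_le_add (hC r hr) (hD r hr))

lemma HardyBounded.sub (hu : HardyBounded q u) (hv : HardyBounded q v) (hq : 0 ≤ q) (hq1 : q ≤ 1)
    (huc : ContinuousOn u (ball 0 1)) (hvc : ContinuousOn v (ball 0 1)) :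
    HardyBounded q (fun z => u z - v z) := by
  simpa [sub_eq_add_neg] using
    hu.add (hv.const_mul (-1)) hq hq1 huc (hvc.const_smul (-1 : ℝ))

lemma HardyBounded.anti {q' : ℝ} (h : HardyBounded q' u) (hq : 0 ≤ q) (hqq' : q ≤ q')
    (huc : ContinuousOn u (ball 0 1)) : HardyBounded q u := by
  obtain ⟨C, hC⟩ := h
  exact ⟨1 + C, fun r hr => (circMeanR_le_one_add_circMeanR hq hqq'
    (huc.mono (sphere_abs_subset_unitBall hr))).trans (by gcongr; exact hC r hr)⟩

lemma hardySup_add_le (hu : HardyBounded q u) (hv : HardyBounded q v) (hq : 0 ≤ q) (hq1 : q ≤ 1)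
    (huc : ContinuousOn u (ball 0 1)) (hvc : ContinuousOn v (ball 0 1)) :
    hardySup q (fun z => u z + v z) ≤ hardySup q u + hardySup q v :=
  hardySup_le fun _ hr =>
    (circMeanR_add_le hq hq1 (huc.mono (sphere_abs_subset_unitBall hr))
      (hvc.mono (sphere_abs_subset_unitBall hr))).trans
      (add_le_add (hu.circMeanR_le_hardySup hr) (hv.circMeanR_le_hardySup hr))

end HardySpace

/-! ### Local control of a holomorphic function by its real part -/

section Schwarz

variable {f : ℂ → ℂ} {R : ℝ} {z : ℂ}

lemma continuousOn_sphere_abs (hf : DiffContOnCl ℂ f (ball 0 R)) (hR : 0 < R) :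
    ContinuousOn f (sphere 0 |R|) := by
  rw [abs_of_pos hR]
  exact hf.continuousOn_ball.mono sphere_subset_closedBall

lemma re_circleAverage_herglotzRieszKernel_smul_re (hf : DiffContOnCl ℂ f (ball 0 R))
    (hz : z ∈ ball 0 R) :
    (Real.circleAverage (fun ζ => herglotzRieszKernel 0 z ζ • ((f ζ).re : ℂ)) 0 R).re =
      (f z).re := by
  have hfs := continuousOn_sphere_abs hf (pos_of_mem_ball hz)
  have hint : CircleIntegrable ((re ∘ herglotzRieszKernel 0 z) • f) 0 R :=
    hfs.circleIntegrable'.continuousOn_smul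
      (continuous_re.comp_continuousOn (continuousOn_herglotzRieszKernel_sphere hz))
  calc (Real.circleAverage (fun ζ => herglotzRieszKernel 0 z ζ • ((f ζ).re : ℂ)) 0 R).re
      = Real.circleAverage ((re ∘ herglotzRieszKernel 0 z) • fun ζ => (f ζ).re) 0 R :=
        re_circleAverage_herglotzRieszKernel_smul
          (continuous_re.comp_continuousOn hfs).circleIntegrable' hz
    _ = Real.circleAverage (reCLM ∘ ((re ∘ herglotzRieszKernel 0 z) • f)) 0 R := by
        congr 1; ext ζ; simp
    _ = (f z).re := by
        rw [reCLM.circleAverage_comp_comm hint, hf.circleAverage_re_herglotzRieszKernel_smul hz,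
          reCLM_apply]

lemma im_circleAverage_herglotzRieszKernel_zero_smul_ofReal {u : ℂ → ℝ} (hR : 0 < R)
    (hu : CircleIntegrable u 0 R) :
    (Real.circleAverage (fun ζ => herglotzRieszKernel 0 0 ζ • (u ζ : ℂ)) 0 R).im = 0 := by
  have hker : Real.circleAverage (fun ζ => herglotzRieszKernel 0 0 ζ • (u ζ : ℂ)) 0 R =
      Real.circleAverage (ofRealCLM ∘ u) 0 R :=
    Real.circleAverage_congr_sphere fun ζ hζ => by
      have hζ0 : ζ ≠ 0 := ne_of_mem_sphere hζ (abs_pos.2 hR.ne').ne'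
      simp [herglotzRieszKernel_def, hζ0]
  rw [hker, ofRealCLM.circleAverage_comp_comm hu, ofRealCLM_apply, ofReal_im]

lemma circleAverage_herglotzRieszKernel_smul_re (hf : DiffContOnCl ℂ f (ball 0 R))
    (hz : z ∈ ball 0 R) :
    Real.circleAverage (fun ζ => herglotzRieszKernel 0 z ζ • ((f ζ).re : ℂ)) 0 R =
      f z - (f 0).im * I := by
  have hR : 0 < R := pos_of_mem_ball hz
  have hre := continuous_re.comp_continuousOn (continuousOn_sphere_abs hf hR)
  set g : ℂ → ℂ := fun w =>
    Real.circleAverage (fun ζ => herglotzRieszKernel 0 w ζ • ((f ζ).re : ℂ)) 0 R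
  have hg : AnalyticOnNhd ℂ g (ball 0 R) :=
    analyticOnNhd_circleAverage_herglotzRieszKernel_smul
      (continuous_ofReal.comp_continuousOn hre).circleIntegrable'
  obtain ⟨c, hc⟩ :=
    ((hf.differentiableOn.analyticOnNhd isOpen_ball).sub hg).eq_re_add_const_mul_I_of_re_eq_const
      (c₀ := 0) (fun w hw => by
        simp [g, re_circleAverage_herglotzRieszKernel_smul_re hf hw, -smul_eq_mul])
      isOpen_ball (isConnected_ball hR)
  have hg0 : (g 0).im = 0 :=
    im_circleAverage_herglotzRieszKernel_zero_smul_ofReal hR hre.circleIntegrable'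
  have hc0 : (f 0).im = c := by simpa [hg0] using congrArg im (hc 0 (mem_ball_self hR))
  have hcz : f z - g z = c * I := by simpa using hc z hz
  rw [hc0, ← hcz, sub_sub_cancel]

lemma norm_herglotzRieszKernel_le {ζ : ℂ} (hζ : ‖ζ‖ = R) (hz : ‖z‖ < R) :
    ‖herglotzRieszKernel 0 z ζ‖ ≤ (R + ‖z‖) / (R - ‖z‖) := by
  rw [herglotzRieszKernel_def, sub_zero, sub_zero, norm_div, ← hζ]
  have : 0 < ‖ζ‖ - ‖z‖ := by rw [hζ]; linarith
  gcongr
  · exact norm_add_le _ _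
  · exact norm_sub_norm_le _ _

lemma norm_le_mul_circleAverage_abs_re (hf : DiffContOnCl ℂ f (ball 0 R)) (hf0 : (f 0).im = 0)
    (hz : z ∈ ball 0 R) :
    ‖f z‖ ≤ (R + ‖z‖) / (R - ‖z‖) * Real.circleAverage (fun ζ => |(f ζ).re|) 0 R := by
  have hR : 0 < R := pos_of_mem_ball hz
  have hre := continuous_re.comp_continuousOn (continuousOn_sphere_abs hf hR)
  have hschwarz := circleAverage_herglotzRieszKernel_smul_re hf hz
  rw [hf0, ofReal_zero, zero_mul, sub_zero] at hschwarz
  rw [← hschwarz, ← smul_eq_mul, ← Real.circleAverage_fun_smul]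
  refine (norm_circleAverage_le _ _ _).trans (Real.circleAverage_mono ?_
    hre.abs.circleIntegrable'.const_fun_smul fun ζ hζ => ?_)
  · exact ((continuousOn_herglotzRieszKernel_sphere hz).smul
      (continuous_ofReal.comp_continuousOn hre)).norm.circleIntegrable'
  · rw [abs_of_pos hR, mem_sphere_zero_iff_norm] at hζ
    rw [norm_smul, norm_real, Real.norm_eq_abs, smul_eq_mul]
    gcongr
    exact norm_herglotzRieszKernel_le hζ (mem_ball_zero_iff.1 hz)

end Schwarz

lemma le_rpow_one_sub_mul_rpow {x M p : ℝ} (hx : 0 ≤ x) (hxM : x ≤ M) (hp : p ≤ 1) :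
    x ≤ M ^ (1 - p) * x ^ p := by
  rcases hx.eq_or_lt with rfl | hx
  · positivity
  · calc x = x ^ (1 - p) * x ^ p := by rw [← Real.rpow_add hx, sub_add_cancel, Real.rpow_one]
      _ ≤ M ^ (1 - p) * x ^ p := by gcongr

lemma circleAverage_abs_le_rpow_mul_circMeanR {u : ℂ → ℝ} {p r M : ℝ}
    (hu : ContinuousOn u (sphere 0 |r|)) (hM : ∀ z ∈ sphere (0 : ℂ) |r|, |u z| ≤ M)
    (hp0 : 0 ≤ p) (hp1 : p ≤ 1) :
    Real.circleAverage (fun z => |u z|) 0 r ≤ M ^ (1 - p) * circMeanR p u r := by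
  rw [circMeanR_eq_circleAverage, ← smul_eq_mul, ← Real.circleAverage_fun_smul]
  exact Real.circleAverage_mono hu.abs.circleIntegrable'
    (circleIntegrable_abs_rpow hp0 hu).const_fun_smul
    fun z hz => le_rpow_one_sub_mul_rpow (abs_nonneg _) (hM z hz) hp1

lemma norm_le_two_rpow_mul_of_isMaxOn {f : ℂ → ℂ} {p R : ℝ} (hp0 : 0 < p) {w ζ : ℂ}
    (hw : ‖w‖ < R) (hmax : IsMaxOn (fun z => (R - ‖z‖) * ‖f z‖ ^ p) (closedBall 0 R) w)
    (hζ : ‖ζ‖ = (‖w‖ + R) / 2) : ‖f ζ‖ ≤ 2 ^ (1 / p) * ‖f w‖ := by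
  have hζmax : (R - ‖ζ‖) * ‖f ζ‖ ^ p ≤ (R - ‖w‖) * ‖f w‖ ^ p :=
    hmax (mem_closedBall_zero_iff.2 (by linarith))
  rw [hζ, show R - (‖w‖ + R) / 2 = (R - ‖w‖) / 2 by ring] at hζmax
  rw [← Real.rpow_le_rpow_iff (norm_nonneg _) (by positivity) hp0,
    Real.mul_rpow (by positivity) (norm_nonneg _), ← Real.rpow_mul zero_le_two,
    one_div_mul_cancel hp0.ne', Real.rpow_one]
  refine le_of_mul_le_mul_left ?_ (sub_pos.2 hw)
  linarith

section HardyLittlewood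

variable {f : ℂ → ℂ} {p N : ℝ}

/- The Schwarz formula on the circle halfway between `w` and the boundary bounds `‖f w‖` by
`‖f w‖ ^ (1 - p)` times the `p`-mean, since `|Re f| ≤ C ‖f w‖ ^ (1 - p) |Re f| ^ p` there. -/
lemma weighted_norm_rpow_le_of_isMaxOn (hf : DifferentiableOn ℂ f (ball 0 1))
    (hf0 : (f 0).im = 0) (hp0 : 0 < p) (hp1 : p ≤ 1)
    (hN : ∀ r ∈ Ioo (0 : ℝ) 1, circMeanR p (fun z => (f z).re) r ≤ N) {R : ℝ} (hR1 : R < 1)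
    {w : ℂ} (hw : ‖w‖ < R) (hfw : f w ≠ 0)
    (hmax : IsMaxOn (fun z => (R - ‖z‖) * ‖f z‖ ^ p) (closedBall 0 R) w) :
    (R - ‖w‖) * ‖f w‖ ^ p ≤ 4 * (2 ^ (1 / p)) ^ (1 - p) * N := by
  set s := (‖w‖ + R) / 2 with hs
  have hd : 0 < R - ‖w‖ := sub_pos.2 hw
  have hX : 0 < ‖f w‖ := norm_pos_iff.2 hfw
  have hs01 : s ∈ Ioo (0 : ℝ) 1 := by constructor <;> linarith [norm_nonneg w]
  have hcont : ContinuousOn (fun ζ => (f ζ).re) (sphere 0 |s|) :=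
    continuous_re.comp_continuousOn (hf.continuousOn.mono (sphere_abs_subset_unitBall hs01))
  have hmean : Real.circleAverage (fun ζ => |(f ζ).re|) 0 s ≤
      (2 ^ (1 / p) * ‖f w‖) ^ (1 - p) * N := by
    refine (circleAverage_abs_le_rpow_mul_circMeanR hcont (fun ζ hζ => ?_) hp0.le hp1).trans
      (by gcongr; exact hN s hs01)
    rw [abs_of_pos hs01.1, mem_sphere_zero_iff_norm] at hζ
    exact (abs_re_le_norm _).trans (norm_le_two_rpow_mul_of_isMaxOn hp0 hw hmax hζ)
  have hN0 : 0 ≤ N := (circMeanR_nonneg _ _ _).trans (hN s hs01)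
  have hself : ‖f w‖ ≤ 2 / ((R - ‖w‖) / 2) * ((2 ^ (1 / p) * ‖f w‖) ^ (1 - p) * N) :=
    calc ‖f w‖ ≤ (s + ‖w‖) / (s - ‖w‖) * Real.circleAverage (fun ζ => |(f ζ).re|) 0 s :=
          norm_le_mul_circleAverage_abs_re (diffContOnCl_ball_of_lt_one hf hs01.2) hf0
            (mem_ball_zero_iff.2 (by linarith))
      _ ≤ (s + ‖w‖) / (s - ‖w‖) * ((2 ^ (1 / p) * ‖f w‖) ^ (1 - p) * N) :=
          mul_le_mul_of_nonneg_left hmean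
            (div_nonneg (by linarith [norm_nonneg w]) (by linarith))
      _ ≤ 2 / ((R - ‖w‖) / 2) * ((2 ^ (1 / p) * ‖f w‖) ^ (1 - p) * N) := by
          gcongr <;> linarith
  have hsplit : ‖f w‖ ^ p * ‖f w‖ ^ (1 - p) = ‖f w‖ := by
    rw [← Real.rpow_add hX, add_sub_cancel, Real.rpow_one]
  refine le_of_mul_le_mul_right ?_ (Real.rpow_pos_of_pos hX (1 - p))
  calc (R - ‖w‖) * ‖f w‖ ^ p * ‖f w‖ ^ (1 - p) = (R - ‖w‖) * ‖f w‖ := by rw [mul_assoc, hsplit]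
    _ ≤ (R - ‖w‖) * (2 / ((R - ‖w‖) / 2) * ((2 ^ (1 / p) * ‖f w‖) ^ (1 - p) * N)) := by gcongr
    _ = 4 * (2 ^ (1 / p)) ^ (1 - p) * N * ‖f w‖ ^ (1 - p) := by
        rw [Real.mul_rpow (by positivity) hX.le]
        field_simp
        ring

lemma one_sub_norm_mul_norm_rpow_le (hf : DifferentiableOn ℂ f (ball 0 1))
    (hf0 : (f 0).im = 0) (hp0 : 0 < p) (hp1 : p ≤ 1)
    (hN : ∀ r ∈ Ioo (0 : ℝ) 1, circMeanR p (fun z => (f z).re) r ≤ N) {z : ℂ} (hz : ‖z‖ < 1) :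
    (1 - ‖z‖) * ‖f z‖ ^ p ≤ 8 * (2 ^ (1 / p)) ^ (1 - p) * N := by
  have hN0 : 0 ≤ N :=
    (circMeanR_nonneg _ _ _).trans (hN (1 / 2) ⟨by norm_num, by norm_num⟩)
  set R := (1 + ‖z‖) / 2 with hR
  have hzR : ‖z‖ < R := by linarith
  have hcont : ContinuousOn (fun w => (R - ‖w‖) * ‖f w‖ ^ p) (closedBall 0 R) :=
    (continuous_const.sub continuous_norm).continuousOn.mul
      ((hf.continuousOn.mono (closedBall_subset_ball (by linarith))).norm.rpow_const
        fun _ _ => Or.inr hp0.le)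
  obtain ⟨w, hw, hmax⟩ := (isCompact_closedBall (0 : ℂ) R).exists_isMaxOn
    ⟨z, mem_closedBall_zero_iff.2 hzR.le⟩ hcont
  have hweighted : (R - ‖w‖) * ‖f w‖ ^ p ≤ 4 * (2 ^ (1 / p)) ^ (1 - p) * N := by
    rcases (mem_closedBall_zero_iff.1 hw).eq_or_lt with hwR | hwR
    · rw [hwR, sub_self, zero_mul]; positivity
    by_cases hfw : f w = 0
    · rw [hfw, norm_zero, Real.zero_rpow hp0.ne', mul_zero]; positivity
    · exact weighted_norm_rpow_le_of_isMaxOn hf hf0 hp0 hp1 hN (by linarith) hwR hfw hmax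
  have hzw : (R - ‖z‖) * ‖f z‖ ^ p ≤ (R - ‖w‖) * ‖f w‖ ^ p :=
    hmax (mem_closedBall_zero_iff.2 hzR.le)
  rw [show 1 - ‖z‖ = 2 * (R - ‖z‖) by rw [hR]; ring]
  linarith

end HardyLittlewood

/-! ### The space `h^p` -/

lemma ballTopology_dist {α : Type*} [PseudoMetricSpace α] :
    ballTopology (dist : α → α → ℝ) = UniformSpace.toTopologicalSpace := by
  refine (TopologicalSpace.isTopologicalBasis_of_isOpen_of_nhds ?_ ?_).eq_generateFrom.symm
  · rintro _ ⟨x, ε, -, rfl⟩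
    exact isOpen_lt (continuous_const.dist continuous_id) continuous_const
  · intro x U hxU hU
    obtain ⟨ε, hε, hball⟩ := Metric.isOpen_iff.1 hU x hxU
    exact ⟨_, ⟨x, ε, hε, rfl⟩, by simpa using hε, fun y hy => hball (mem_ball'.2 hy)⟩

namespace HarmVp

variable {p : ℝ}

lemma continuousOn_re (f : HarmVp p) : ContinuousOn (fun z => (f.1 z).re) (ball 0 1) :=
  continuous_re.comp_continuousOn f.2.1.continuousOn

lemma continuousOn_im (f : HarmVp p) : ContinuousOn (fun z => (f.1 z).im) (ball 0 1) :=
  continuous_im.comp_continuousOn f.2.1.continuousOn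

lemma hardyBounded_re (f : HarmVp p) : HardyBounded p (fun z => (f.1 z).re) :=
  f.2.2.2

lemma continuousOn_re_sub (f g : HarmVp p) :
    ContinuousOn (fun z => (f.1 z - g.1 z).re) (ball 0 1) :=
  f.continuousOn_re.sub g.continuousOn_re

variable [hp0 : Fact (0 < p)] [hp1 : Fact (p ≤ 1)]

lemma hardyBounded_re_sub (f g : HarmVp p) : HardyBounded p (fun z => (f.1 z - g.1 z).re) :=
  f.hardyBounded_re.sub g.hardyBounded_re hp0.out.le hp1.out f.continuousOn_re g.continuousOn_re

/- Only a pseudometric: elements of `HarmVp p` may differ outside the unit disc. -/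
instance : PseudoMetricSpace (HarmVp p) where
  dist := harmDistP p
  dist_self f := by simp [harmDistP, circMeanR, Real.zero_rpow hp0.out.ne']
  dist_comm f g := by
    simp only [harmDistP, circMeanR, sub_re, abs_sub_comm]
  dist_triangle f g h := by
    have hadd := hardySup_add_le (hardyBounded_re_sub f g) (hardyBounded_re_sub g h) hp0.out.le
      hp1.out (continuousOn_re_sub f g) (continuousOn_re_sub g h)
    simp only [← add_re, sub_add_sub_cancel] at hadd
    exact hadd

lemma dist_eq_hardySup (f g : HarmVp p) :
    dist f g = hardySup p (fun z => (f.1 z - g.1 z).re) :=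
  rfl

lemma norm_sub_le_dist_rpow (f g : HarmVp p) {z : ℂ} (hz : ‖z‖ < 1) :
    ‖f.1 z - g.1 z‖ ≤ (8 * (2 ^ (1 / p)) ^ (1 - p) / (1 - ‖z‖) * dist f g) ^ p⁻¹ := by
  have hbound : (1 - ‖z‖) * ‖f.1 z - g.1 z‖ ^ p ≤ 8 * (2 ^ (1 / p)) ^ (1 - p) * dist f g :=
    one_sub_norm_mul_norm_rpow_le (f.2.1.sub g.2.1) (by simp [f.2.2.1, g.2.2.1]) hp0.out
      hp1.out (fun _ hr => (hardyBounded_re_sub f g).circMeanR_le_hardySup hr) hz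
  have hz' : 0 < 1 - ‖z‖ := sub_pos.2 hz
  rw [Real.le_rpow_inv_iff_of_pos (norm_nonneg _) (by positivity) hp0.out, div_mul_eq_mul_div,
    le_div_iff₀' hz']
  exact hbound

lemma dist_circMeanR_im_le {q r : ℝ} (hq : 0 ≤ q) (hq1 : q ≤ 1) (hr : r ∈ Ioo (0 : ℝ) 1)
    (f g : HarmVp p) :
    dist (circMeanR q (fun z => (f.1 z).im) r) (circMeanR q (fun z => (g.1 z).im) r) ≤
      ((8 * (2 ^ (1 / p)) ^ (1 - p) / (1 - r) * dist f g) ^ p⁻¹) ^ q := by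
  have hsub := sphere_abs_subset_unitBall hr
  have hf := f.continuousOn_im.mono hsub
  have hg := g.continuousOn_im.mono hsub
  refine (abs_circMeanR_sub_le hq hq1 hf hg).trans
    (circMeanR_le_rpow_of_forall_abs_le hq (hf.fun_sub hg) fun z hz => ?_)
  have hpoint := norm_sub_le_dist_rpow f g (mem_ball_zero_iff.1 (hsub hz))
  rw [mem_sphere_zero_iff_norm.1 hz, abs_of_pos hr.1] at hpoint
  exact (abs_im_le_norm (f.1 z - g.1 z)).trans hpoint

lemma continuous_circMeanR_im {q r : ℝ} (hq : 0 < q) (hq1 : q ≤ 1) (hr : r ∈ Ioo (0 : ℝ) 1) :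
    Continuous fun f : HarmVp p => circMeanR q (fun z => (f.1 z).im) r := by
  refine continuous_iff_continuousAt.2 fun g => tendsto_iff_dist_tendsto_zero.2 ?_
  refine squeeze_zero (fun _ => dist_nonneg) (fun f => dist_circMeanR_im_le hq.le hq1 hr f g) ?_
  have hcont : Continuous fun f : HarmVp p =>
      ((8 * (2 ^ (1 / p)) ^ (1 - p) / (1 - r) * dist f g) ^ p⁻¹) ^ q :=
    ((continuous_const.mul (continuous_id.dist continuous_const)).rpow_const fun _ =>
      Or.inr (inv_nonneg.2 hp0.out.le)).rpow_const fun _ => Or.inr hq.le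
  simpa [Real.zero_rpow (inv_ne_zero hp0.out.ne'), Real.zero_rpow hq.ne'] using hcont.tendsto g

lemma isGδ_setOf_not_hardyBounded_im :
    IsGδ {f : HarmVp p | ∀ q : ℝ, 0 < q → ¬ HardyBounded q (fun z => (f.1 z).im)} := by
  have hinter : {f : HarmVp p | ∀ q : ℝ, 0 < q → ¬ HardyBounded q (fun z => (f.1 z).im)} =
      ⋂ n : ℕ, ⋂ m : ℕ, ⋃ r ∈ Ioo (0 : ℝ) 1,
        {f : HarmVp p | (m : ℝ) < circMeanR (1 / ((n : ℝ) + 1)) (fun z => (f.1 z).im) r} := by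
    ext f
    simp only [mem_ofPred_eq, mem_iInter, mem_iUnion, exists_prop]
    constructor
    · intro hf n m
      by_contra! hle
      exact hf _ (by positivity) ⟨m, hle⟩
    · intro hf q hq hbdd
      obtain ⟨n, hn⟩ := exists_nat_one_div_lt hq
      obtain ⟨C, hC⟩ := hbdd.anti (by positivity) hn.le f.continuousOn_im
      obtain ⟨m, hm⟩ := exists_nat_gt C
      obtain ⟨r, hr, hlt⟩ := hf n m
      linarith [hC r hr]
  rw [hinter]
  refine .iInter fun n => .iInter fun m => (isOpen_biUnion fun r hr => ?_).isGδ
  exact isOpen_lt continuous_const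
    (continuous_circMeanR_im (by positivity) (div_le_one_of_le₀ (by simp) (by positivity)) hr)

/-- The element `f + t h` of `h^p`. -/
def addRealMul (f h : HarmVp p) (t : ℝ) : HarmVp p :=
  ⟨fun z => f.1 z + t * h.1 z, f.2.1.add (h.2.1.const_mul _), by simp [f.2.2.1, h.2.2.1], by
    simp only [add_re, re_ofReal_mul]
    exact f.hardyBounded_re.add (h.hardyBounded_re.const_mul t) hp0.out.le hp1.out
      f.continuousOn_re (h.continuousOn_re.const_smul t)⟩

lemma dist_addRealMul (f h : HarmVp p) (t : ℝ) :
    dist (addRealMul f h t) f = |t| ^ p * hardySup p (fun z => (h.1 z).re) := by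
  rw [dist_eq_hardySup, ← hardySup_const_mul]
  simp only [addRealMul, add_sub_cancel_left, re_ofReal_mul]

lemma tendsto_addRealMul (f h : HarmVp p) : Tendsto (addRealMul f h) (𝓝 0) (𝓝 f) := by
  have hpow : Tendsto (fun t : ℝ => |t| ^ p) (𝓝 0) (𝓝 0) := by
    have hcont : Continuous fun t : ℝ => |t| ^ p :=
      continuous_abs.rpow_const fun _ => Or.inr hp0.out.le
    simpa [Real.zero_rpow hp0.out.ne'] using hcont.tendsto 0
  rw [tendsto_iff_dist_tendsto_zero]
  simpa [dist_addRealMul] using hpow.mul_const (hardySup p fun z => (h.1 z).re)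

lemma not_hardyBounded_im_addRealMul {f h : HarmVp p}
    (hh : ∀ q : ℝ, 0 < q → ¬ HardyBounded q (fun z => (h.1 z).im)) {q₀ : ℝ} (hq₀ : 0 < q₀)
    (hf : HardyBounded q₀ (fun z => (f.1 z).im)) {t : ℝ} (ht : t ≠ 0) {q : ℝ} (hq : 0 < q) :
    ¬ HardyBounded q (fun z => ((addRealMul f h t).1 z).im) := by
  intro hsum
  have hm : 0 < min (min q₀ q) 1 := by positivity
  refine hh _ hm ?_
  have hdiff := (hsum.anti hm.le ((min_le_left _ _).trans (min_le_right _ _))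
    (continuousOn_im _)).sub (hf.anti hm.le ((min_le_left _ _).trans (min_le_left _ _))
    (continuousOn_im _)) hm.le (min_le_right _ _) (continuousOn_im _) (continuousOn_im _)
  simpa [addRealMul, ht] using hdiff.const_mul t⁻¹

lemma dense_setOf_not_hardyBounded_im {h : HarmVp p}
    (hh : ∀ q : ℝ, 0 < q → ¬ HardyBounded q (fun z => (h.1 z).im)) :
    Dense {f : HarmVp p | ∀ q : ℝ, 0 < q → ¬ HardyBounded q (fun z => (f.1 z).im)} := by
  intro f
  by_cases hf : ∀ q : ℝ, 0 < q → ¬ HardyBounded q (fun z => (f.1 z).im)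
  · exact subset_closure hf
  push Not at hf
  obtain ⟨q₀, hq₀, hf⟩ := hf
  refine mem_closure_of_tendsto (b := 𝓝[≠] 0)
    ((tendsto_addRealMul f h).mono_left nhdsWithin_le_nhds) ?_
  filter_upwards [self_mem_nhdsWithin] with t ht q hq
  exact not_hardyBounded_im_addRealMul hh hq₀ hf ht hq

end HarmVp

/-! ### Kolmogorov's estimate -/

lemma cos_mul_norm_rpow_le_re_cpow {w : ℂ} (hw : 0 ≤ w.re) {s : ℝ} (hs : |s| ≤ 1) :
    Real.cos (s * (Real.pi / 2)) * ‖w‖ ^ s ≤ (w ^ (s : ℂ)).re := by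
  have harg : |arg w * s| ≤ |s * (Real.pi / 2)| := by
    rw [abs_mul, abs_mul, mul_comm, abs_of_pos Real.pi_div_two_pos]
    gcongr
    exact abs_arg_le_pi_div_two_iff.2 hw
  have hpi : |s * (Real.pi / 2)| ≤ Real.pi := by
    rw [abs_mul, abs_of_pos Real.pi_div_two_pos]
    nlinarith [Real.pi_pos]
  rw [cpow_ofReal_re, mul_comm, ← Real.cos_abs (s * _), ← Real.cos_abs (arg w * s)]
  gcongr
  exact Real.cos_le_cos_of_nonneg_of_le_pi (abs_nonneg _) hpi harg

lemma cos_mul_circleAverage_norm_rpow_le {g : ℂ → ℂ} {c : ℂ} {R : ℝ}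
    (hg : DifferentiableOn ℂ g (closedBall c |R|)) (hre : ∀ z ∈ closedBall c |R|, 0 < (g z).re)
    {s : ℝ} (hs : |s| ≤ 1) :
    Real.cos (s * (Real.pi / 2)) * Real.circleAverage (fun z => ‖g z‖ ^ s) c R ≤
      (g c ^ (s : ℂ)).re := by
  have hpow : DifferentiableOn ℂ (fun z => g z ^ (s : ℂ)) (closedBall c |R|) :=
    hg.cpow (differentiableOn_const _) fun z hz => Or.inl (hre z hz)
  have hcont : ContinuousOn (fun z => ‖g z‖ ^ s) (sphere c |R|) :=
    (hg.continuousOn.mono sphere_subset_closedBall).norm.rpow_const fun z hz =>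
      Or.inl (norm_ne_zero_iff.2 fun h => (hre z (sphere_subset_closedBall hz)).ne' (by simp [h]))
  have hpow' := hpow.continuousOn.mono sphere_subset_closedBall
  have hmean : Real.circleAverage (fun z => (g z ^ (s : ℂ)).re) c R = (g c ^ (s : ℂ)).re := by
    rw [← (hpow.mono closure_ball_subset_closedBall).diffContOnCl.circleAverage]
    exact reCLM.circleAverage_comp_comm hpow'.circleIntegrable'
  rw [← hmean, ← smul_eq_mul, ← Real.circleAverage_fun_smul]
  exact Real.circleAverage_mono (continuousOn_const.mul hcont).circleIntegrable'
    (continuous_re.comp_continuousOn hpow').circleIntegrable'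
    fun z hz => cos_mul_norm_rpow_le_re_cpow (hre z (sphere_subset_closedBall hz)).le hs

/-! ### Dyadic blocks -/

/-- The function `w / (1 - w ^ 2)` of `w = z ^ 2 ^ j`. For `p < 1` the circle means of order `p` of
its real part are summable over `j`, uniformly in the radius, whereas its modulus does not tend to
zero anywhere on the unit circle. -/
def dyadicBlock (j : ℕ) (z : ℂ) : ℂ := z ^ 2 ^ j / (1 - (z ^ 2 ^ j) ^ 2)

lemma one_sub_sq_re_pos {w : ℂ} (hw : ‖w‖ < 1) : 0 < (1 - w ^ 2).re := by
  have hre : (w ^ 2).re ≤ ‖w‖ ^ 2 := (re_le_norm _).trans_eq (norm_pow _ _)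
  have hsq : ‖w‖ ^ 2 < 1 := pow_lt_one₀ (norm_nonneg w) hw two_ne_zero
  rw [sub_re, one_re]
  linarith

lemma one_sub_sq_ne_zero {w : ℂ} (hw : ‖w‖ < 1) : 1 - w ^ 2 ≠ 0 := fun h =>
  (one_sub_sq_re_pos hw).ne' (by rw [h, zero_re])

lemma one_sub_norm_sq_le_norm_one_sub_sq (w : ℂ) : 1 - ‖w‖ ^ 2 ≤ ‖1 - w ^ 2‖ := by
  rw [← norm_pow, ← norm_one (α := ℂ)]
  exact norm_sub_norm_le _ _

lemma norm_pow_two_pow_lt_one {z : ℂ} (hz : ‖z‖ < 1) (j : ℕ) : ‖z ^ 2 ^ j‖ < 1 := by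
  rw [norm_pow]
  exact pow_lt_one₀ (norm_nonneg _) hz (by positivity)

lemma differentiableOn_dyadicBlock (j : ℕ) : DifferentiableOn ℂ (dyadicBlock j) (ball 0 1) :=
  DifferentiableOn.div (by fun_prop) (by fun_prop) fun _ hz =>
    one_sub_sq_ne_zero (norm_pow_two_pow_lt_one (mem_ball_zero_iff.1 hz) j)

lemma norm_dyadicBlock_le {r : ℝ} (hr : r < 1) {z : ℂ} (hz : ‖z‖ ≤ r) (j : ℕ) :
    ‖dyadicBlock j z‖ ≤ r ^ j * (1 - r)⁻¹ := by
  have hr0 : 0 ≤ r := (norm_nonneg z).trans hz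
  have : 0 < 1 - r := sub_pos.2 hr
  have hnum : ‖z ^ 2 ^ j‖ ≤ r ^ j := by
    rw [norm_pow]
    exact (pow_le_pow_left₀ (norm_nonneg z) hz _).trans
      (pow_le_pow_of_le_one hr0 hr.le Nat.lt_two_pow_self.le)
  have hden : 1 - r ≤ ‖1 - (z ^ 2 ^ j) ^ 2‖ := by
    have hsq : ‖z ^ 2 ^ j‖ ^ 2 ≤ r := by
      rw [norm_pow, ← pow_mul]
      exact (pow_le_of_le_one (norm_nonneg z) (hz.trans hr.le) (by positivity)).trans hz
    linarith [one_sub_norm_sq_le_norm_one_sub_sq (z ^ 2 ^ j)]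
  rw [dyadicBlock, norm_div, div_eq_mul_inv]
  gcongr

lemma le_norm_dyadicBlock {z : ℂ} (hz : ‖z‖ < 1) (j : ℕ) :
    ‖z‖ ^ 2 ^ j / 2 ≤ ‖dyadicBlock j z‖ := by
  have hw := norm_pow_two_pow_lt_one hz j
  have hden : ‖1 - (z ^ 2 ^ j) ^ 2‖ ≤ 2 := by
    calc ‖1 - (z ^ 2 ^ j) ^ 2‖ ≤ ‖(1 : ℂ)‖ + ‖(z ^ 2 ^ j) ^ 2‖ := norm_sub_le _ _
      _ ≤ 1 + 1 := by
        rw [norm_one, norm_pow _ 2]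
        gcongr
        exact pow_le_one₀ (norm_nonneg _) hw.le
      _ = 2 := by norm_num
  have hpos : 0 < ‖1 - (z ^ 2 ^ j) ^ 2‖ := norm_pos_iff.2 (one_sub_sq_ne_zero hw)
  rw [dyadicBlock, norm_div, norm_pow]
  gcongr

lemma re_div_one_sub_sq (w : ℂ) :
    (w / (1 - w ^ 2)).re = w.re * (1 - ‖w‖ ^ 2) / ‖1 - w ^ 2‖ ^ 2 := by
  rw [div_re, ← add_div, ← normSq_eq_norm_sq, ← normSq_eq_norm_sq, normSq_apply w]
  simp only [pow_two, sub_re, sub_im, one_re, one_im, mul_re, mul_im]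
  ring

lemma abs_re_div_one_sub_sq_le {w : ℂ} (hw : ‖w‖ < 1) :
    |(w / (1 - w ^ 2)).re| ≤ ‖w‖ * (1 - ‖w‖ ^ 2) / ‖1 - w ^ 2‖ ^ 2 := by
  have hsq : 0 ≤ 1 - ‖w‖ ^ 2 := sub_nonneg.2 (pow_le_one₀ (norm_nonneg w) hw.le)
  rw [re_div_one_sub_sq, abs_div, abs_mul, abs_of_nonneg hsq, abs_of_nonneg (sq_nonneg ‖1 - w ^ 2‖)]
  gcongr
  exact abs_re_le_norm w

/- Trading the factor `‖1 - w²‖ ^ (-p²)` for `(1 - ‖w‖²) ^ (-p²)` brings the exponent of `‖1 - w²‖`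
down from `2p` to `p (2 - p) < 1`, within the range of Kolmogorov's estimate. -/
lemma abs_re_div_one_sub_sq_rpow_le {w : ℂ} (hw : ‖w‖ < 1) {p : ℝ} (hp : 0 ≤ p) :
    |(w / (1 - w ^ 2)).re| ^ p ≤
      ‖w‖ ^ p * (1 - ‖w‖ ^ 2) ^ (p * (1 - p)) * ‖1 - w ^ 2‖ ^ (-(p * (2 - p))) := by
  have hx : 0 < 1 - ‖w‖ ^ 2 := sub_pos.2 (pow_lt_one₀ (norm_nonneg w) hw two_ne_zero)
  have hD : 0 < ‖1 - w ^ 2‖ := norm_pos_iff.2 (one_sub_sq_ne_zero hw)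
  calc |(w / (1 - w ^ 2)).re| ^ p
      ≤ (‖w‖ * (1 - ‖w‖ ^ 2) / ‖1 - w ^ 2‖ ^ 2) ^ p := by
        gcongr
        exact abs_re_div_one_sub_sq_le hw
    _ = ‖w‖ ^ p * (1 - ‖w‖ ^ 2) ^ p *
          (‖1 - w ^ 2‖ ^ (-p ^ 2) * ‖1 - w ^ 2‖ ^ (-(p * (2 - p)))) := by
        rw [Real.div_rpow (by positivity) (by positivity), Real.mul_rpow (norm_nonneg w) hx.le,
          ← Real.rpow_add hD, div_eq_mul_inv, ← Real.rpow_natCast_mul hD.le,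
          ← Real.rpow_neg hD.le]
        push_cast
        ring_nf
    _ ≤ ‖w‖ ^ p * (1 - ‖w‖ ^ 2) ^ p *
          ((1 - ‖w‖ ^ 2) ^ (-p ^ 2) * ‖1 - w ^ 2‖ ^ (-(p * (2 - p)))) := by
        gcongr ?_ * (?_ * ?_)
        exact Real.rpow_le_rpow_of_nonpos hx (one_sub_norm_sq_le_norm_one_sub_sq w)
          (neg_nonpos.2 (sq_nonneg p))
    _ = ‖w‖ ^ p * ((1 - ‖w‖ ^ 2) ^ p * (1 - ‖w‖ ^ 2) ^ (-p ^ 2)) *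
          ‖1 - w ^ 2‖ ^ (-(p * (2 - p))) := by ring
    _ = _ := by
        rw [← Real.rpow_add hx]
        ring_nf

section DyadicBlockMeans

variable {p r : ℝ}

lemma mul_two_sub_lt_one (hp1 : p < 1) : p * (2 - p) < 1 := by
  nlinarith [pow_pos (sub_pos.2 hp1) 2]

lemma cos_mul_two_sub_pos (hp0 : 0 < p) (hp1 : p < 1) :
    0 < Real.cos (p * (2 - p) * (Real.pi / 2)) := by
  have hs0 : 0 < p * (2 - p) := mul_pos hp0 (by linarith)
  have hs1 := mul_two_sub_lt_one hp1
  apply Real.cos_pos_of_mem_Ioo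
  constructor <;> nlinarith [Real.pi_pos]

lemma cos_mul_circleAverage_norm_one_sub_sq_rpow_neg_le {s : ℝ} (hs : |s| ≤ 1)
    (hr : r ∈ Ioo (0 : ℝ) 1) (j : ℕ) :
    Real.cos (s * (Real.pi / 2)) *
      Real.circleAverage (fun z => ‖1 - (z ^ 2 ^ j) ^ 2‖ ^ (-s)) 0 r ≤ 1 := by
  have hre : ∀ z ∈ closedBall (0 : ℂ) |r|, 0 < (1 - (z ^ 2 ^ j) ^ 2).re := fun z hz =>
    one_sub_sq_re_pos (norm_pow_two_pow_lt_one
      ((mem_closedBall_zero_iff.1 hz).trans_lt ((abs_of_pos hr.1).trans_lt hr.2)) j)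
  have hmean := cos_mul_circleAverage_norm_rpow_le (by fun_prop) hre
    (s := -s) (by rwa [abs_neg])
  simpa [neg_mul, Real.cos_neg] using hmean

lemma circMeanR_re_dyadicBlock_le (hp0 : 0 < p) (hp1 : p < 1) (hr : r ∈ Ioo (0 : ℝ) 1) (j : ℕ) :
    circMeanR p (fun z => (dyadicBlock j z).re) r ≤
      (r ^ 2 ^ j) ^ p * (1 - (r ^ 2 ^ j) ^ 2) ^ (p * (1 - p)) /
        Real.cos (p * (2 - p) * (Real.pi / 2)) := by
  have hsub := sphere_abs_subset_unitBall hr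
  have hw : ∀ z ∈ sphere (0 : ℂ) |r|, ‖z ^ 2 ^ j‖ < 1 := fun z hz =>
    norm_pow_two_pow_lt_one (mem_ball_zero_iff.1 (hsub hz)) j
  have hcont : ContinuousOn (fun z : ℂ => ‖1 - (z ^ 2 ^ j) ^ 2‖ ^ (-(p * (2 - p))))
      (sphere 0 |r|) :=
    ContinuousOn.rpow_const (by fun_prop) fun z hz =>
      Or.inl (norm_ne_zero_iff.2 (one_sub_sq_ne_zero (hw z hz)))
  have hre : ContinuousOn (fun z => (dyadicBlock j z).re) (sphere 0 |r|) :=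
    continuous_re.comp_continuousOn ((differentiableOn_dyadicBlock j).continuousOn.mono hsub)
  have hx : 0 ≤ 1 - (r ^ 2 ^ j) ^ 2 :=
    sub_nonneg.2 (pow_le_one₀ (pow_nonneg hr.1.le _) (pow_le_one₀ hr.1.le hr.2.le))
  set T := (r ^ 2 ^ j) ^ p * (1 - (r ^ 2 ^ j) ^ 2) ^ (p * (1 - p))
  have hT : 0 ≤ T := mul_nonneg (Real.rpow_nonneg (pow_nonneg hr.1.le _) _) (Real.rpow_nonneg hx _)
  have hle : circMeanR p (fun z => (dyadicBlock j z).re) r ≤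
      T * Real.circleAverage (fun z => ‖1 - (z ^ 2 ^ j) ^ 2‖ ^ (-(p * (2 - p)))) 0 r := by
    rw [circMeanR_eq_circleAverage, ← smul_eq_mul, ← Real.circleAverage_fun_smul]
    refine Real.circleAverage_mono (circleIntegrable_abs_rpow hp0.le hre)
      (hcont.const_smul T).circleIntegrable' fun z hz => ?_
    have hpoint := abs_re_div_one_sub_sq_rpow_le (hw z hz) hp0.le
    rwa [norm_pow, mem_sphere_zero_iff_norm.1 hz, abs_of_pos hr.1] at hpoint
  have hs : |p * (2 - p)| ≤ 1 := by
    rw [abs_of_pos (mul_pos hp0 (by linarith))]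
    exact (mul_two_sub_lt_one hp1).le
  rw [le_div_iff₀' (cos_mul_two_sub_pos hp0 hp1)]
  nlinarith [cos_mul_circleAverage_norm_one_sub_sq_rpow_neg_le hs hr j,
    cos_mul_two_sub_pos hp0 hp1]

lemma mul_one_sub_rpow_mul_le {c y : ℝ} (hc0 : 0 ≤ c) (hc1 : c ≤ 1) (hy0 : 0 ≤ y) (hy1 : y ≤ 1) :
    y * (1 - y) ^ c * (2 ^ c - 1) ≤ (1 - y ^ 2) ^ c - (1 - y) ^ c := by
  have hchord : 1 + (2 ^ c - 1) * y ≤ (1 + y) ^ c := by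
    have hconc := (Real.concaveOn_rpow hc0 hc1).2 (x := 1) (by simp) (y := 2) (by simp)
      (sub_nonneg.2 hy1) hy0 (sub_add_cancel 1 y)
    simp only [smul_eq_mul, Real.one_rpow] at hconc
    rw [show (1 - y) * 1 + y * 2 = 1 + y by ring] at hconc
    linarith
  have hfactor : (1 - y ^ 2) ^ c = (1 - y) ^ c * (1 + y) ^ c := by
    rw [← Real.mul_rpow (sub_nonneg.2 hy1) (by positivity)]
    ring_nf
  rw [hfactor]
  linarith [mul_le_mul_of_nonneg_left hchord (Real.rpow_nonneg (sub_nonneg.2 hy1) c)]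

lemma one_sub_sq_le_mul_one_sub_rpow (hp0 : 0 < p) (hp2 : p ≤ 2) {x : ℝ} (hx : 0 ≤ x) :
    1 - x ^ 2 ≤ 2 / p * (1 - x ^ p) := by
  have hbern := one_add_mul_self_le_rpow_one_add (s := x ^ p - 1)
    (by linarith [Real.rpow_nonneg hx p]) ((one_le_div hp0).2 hp2)
  rw [add_sub_cancel, ← Real.rpow_mul hx, mul_div_cancel₀ _ hp0.ne', Real.rpow_two] at hbern
  linarith

lemma rpow_mul_one_sub_sq_rpow_le (hp0 : 0 < p) (hp2 : p ≤ 2) {c : ℝ} (hc0 : 0 < c) (hc1 : c ≤ 1)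
    {x : ℝ} (hx0 : 0 ≤ x) (hx1 : x ≤ 1) :
    x ^ p * (1 - x ^ 2) ^ c ≤
      (2 / p) ^ c / (2 ^ c - 1) * ((1 - (x ^ 2) ^ p) ^ c - (1 - x ^ p) ^ c) := by
  have h2c : 0 < (2 : ℝ) ^ c - 1 := sub_pos.2 (Real.one_lt_rpow one_lt_two hc0)
  have hy0 : 0 ≤ x ^ p := Real.rpow_nonneg hx0 p
  have hy1 : x ^ p ≤ 1 := Real.rpow_le_one hx0 hx1 hp0.le
  have hsq : (x ^ 2) ^ p = (x ^ p) ^ 2 := (Real.rpow_pow_comm hx0 p 2).symm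
  have hbase : (1 - x ^ 2) ^ c ≤ (2 / p) ^ c * (1 - x ^ p) ^ c := by
    rw [← Real.mul_rpow (by positivity) (sub_nonneg.2 hy1)]
    exact Real.rpow_le_rpow (sub_nonneg.2 (pow_le_one₀ hx0 hx1))
      (one_sub_sq_le_mul_one_sub_rpow hp0 hp2 hx0) hc0.le
  calc x ^ p * (1 - x ^ 2) ^ c
      ≤ x ^ p * ((2 / p) ^ c * (1 - x ^ p) ^ c) := by gcongr
    _ = (2 / p) ^ c / (2 ^ c - 1) * (x ^ p * (1 - x ^ p) ^ c * (2 ^ c - 1)) := by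
        field_simp
    _ ≤ _ := by
        rw [hsq]
        gcongr
        exact mul_one_sub_rpow_mul_le hc0.le hc1 hy0 hy1

lemma sum_rpow_mul_one_sub_sq_rpow_le (hp0 : 0 < p) (hp2 : p ≤ 2) {c : ℝ} (hc0 : 0 < c)
    (hc1 : c ≤ 1) (hr0 : 0 ≤ r) (hr1 : r ≤ 1) (n : ℕ) :
    ∑ j ∈ Finset.range n, (r ^ 2 ^ j) ^ p * (1 - (r ^ 2 ^ j) ^ 2) ^ c ≤
      (2 / p) ^ c / (2 ^ c - 1) := by
  have h2c : 0 < (2 : ℝ) ^ c - 1 := sub_pos.2 (Real.one_lt_rpow one_lt_two hc0)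
  have hy0 : ∀ j : ℕ, 0 ≤ (r ^ 2 ^ j) ^ p := fun j => Real.rpow_nonneg (pow_nonneg hr0 _) p
  have hy1 : ∀ j : ℕ, (r ^ 2 ^ j) ^ p ≤ 1 := fun j =>
    Real.rpow_le_one (pow_nonneg hr0 _) (pow_le_one₀ hr0 hr1) hp0.le
  have hterm : ∀ j : ℕ, (r ^ 2 ^ j) ^ p * (1 - (r ^ 2 ^ j) ^ 2) ^ c ≤ (2 / p) ^ c / (2 ^ c - 1) *
      ((1 - (r ^ 2 ^ (j + 1)) ^ p) ^ c - (1 - (r ^ 2 ^ j) ^ p) ^ c) := fun j => by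
    rw [pow_succ 2 j, pow_mul]
    exact rpow_mul_one_sub_sq_rpow_le hp0 hp2 hc0 hc1 (pow_nonneg hr0 _) (pow_le_one₀ hr0 hr1)
  refine (Finset.sum_le_sum fun j _ => hterm j).trans ?_
  rw [← Finset.mul_sum, Finset.sum_range_sub fun j => (1 - (r ^ 2 ^ j) ^ p) ^ c]
  refine mul_le_of_le_one_right (by positivity) ?_
  linarith [Real.rpow_le_one (sub_nonneg.2 (hy1 n)) (sub_le_self 1 (hy0 n)) hc0.le,
    Real.rpow_nonneg (sub_nonneg.2 (hy1 0)) c]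

lemma exists_sum_circMeanR_re_dyadicBlock_le (hp0 : 0 < p) (hp1 : p < 1) :
    ∃ C : ℝ, ∀ r ∈ Ioo (0 : ℝ) 1, ∀ n : ℕ,
      ∑ j ∈ Finset.range n, circMeanR p (fun z => (dyadicBlock j z).re) r ≤ C := by
  have hc1 : p * (1 - p) ≤ 1 := by nlinarith
  refine ⟨(2 / p) ^ (p * (1 - p)) / (2 ^ (p * (1 - p)) - 1) /
    Real.cos (p * (2 - p) * (Real.pi / 2)), fun r hr n => (Finset.sum_le_sum fun j _ =>
    circMeanR_re_dyadicBlock_le hp0 hp1 hr j).trans ?_⟩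
  rw [← Finset.sum_div]
  exact div_le_div_of_nonneg_right (sum_rpow_mul_one_sub_sq_rpow_le hp0 (by linarith)
    (mul_pos hp0 (sub_pos.2 hp1)) hc1 hr.1.le hr.2.le n) (cos_mul_two_sub_pos hp0 hp1).le

end DyadicBlockMeans

/-! ### Signed series of dyadic blocks -/

/-- The sign `1` or `-1` encoded by a boolean. -/
def boolSign (b : Bool) : ℂ := if b then 1 else -1

/-- The function `∑ ± z ^ 2 ^ j / (1 - z ^ 2 ^ (j + 1))` on the unit disc with signs `e`; with
booleans as signs, the sign sequences form a compact space. -/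
def signedSeries (e : ℕ → Bool) (z : ℂ) : ℂ := ∑' j, boolSign (e j) * dyadicBlock j z

section SignedSeries

variable {r : ℝ}

lemma norm_boolSign_mul (b : Bool) (w : ℂ) : ‖boolSign b * w‖ = ‖w‖ := by
  cases b <;> simp [boolSign]

lemma abs_re_boolSign_mul (b : Bool) (w : ℂ) : |(boolSign b * w).re| = |w.re| := by
  cases b <;> simp [boolSign]

lemma summable_pow_mul_inv_one_sub (hr0 : 0 ≤ r) (hr1 : r < 1) :
    Summable fun j : ℕ => r ^ j * (1 - r)⁻¹ :=
  (summable_geometric_of_lt_one hr0 hr1).mul_right _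

lemma norm_boolSign_mul_dyadicBlock_le (hr : r < 1) {z : ℂ} (hz : ‖z‖ ≤ r) (b : Bool) (j : ℕ) :
    ‖boolSign b * dyadicBlock j z‖ ≤ r ^ j * (1 - r)⁻¹ :=
  (norm_boolSign_mul _ _).trans_le (norm_dyadicBlock_le hr hz j)

lemma differentiableOn_signedSeries (e : ℕ → Bool) :
    DifferentiableOn ℂ (signedSeries e) (ball 0 1) := by
  intro z hz
  obtain ⟨r, hzr, hr⟩ := exists_between (mem_ball_zero_iff.1 hz)
  have hball : DifferentiableOn ℂ (signedSeries e) (ball 0 r) :=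
    differentiableOn_tsum_of_summable_norm
      (summable_pow_mul_inv_one_sub ((norm_nonneg z).trans hzr.le) hr)
      (fun j => ((differentiableOn_dyadicBlock j).mono (ball_subset_ball hr.le)).const_mul _)
      isOpen_ball
      fun j w hw => norm_boolSign_mul_dyadicBlock_le hr (mem_ball_zero_iff.1 hw).le _ j
  exact (hball.differentiableAt
    (isOpen_ball.mem_nhds (mem_ball_zero_iff.2 hzr))).differentiableWithinAt

lemma continuousOn_re_signedSeries (e : ℕ → Bool) :
    ContinuousOn (fun z => (signedSeries e z).re) (ball 0 1) :=
  continuous_re.comp_continuousOn (differentiableOn_signedSeries e).continuousOn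

lemma continuousOn_im_signedSeries (e : ℕ → Bool) :
    ContinuousOn (fun z => (signedSeries e z).im) (ball 0 1) :=
  continuous_im.comp_continuousOn (differentiableOn_signedSeries e).continuousOn

lemma signedSeries_zero (e : ℕ → Bool) : signedSeries e 0 = 0 := by
  simp [signedSeries, dyadicBlock]

lemma continuousOn_re_boolSign_mul_dyadicBlock (b : Bool) (j : ℕ) :
    ContinuousOn (fun z => (boolSign b * dyadicBlock j z).re) (ball 0 1) :=
  continuous_re.comp_continuousOn (continuousOn_const.mul
    (differentiableOn_dyadicBlock j).continuousOn)

lemma exists_forall_abs_re_signedSeries_sub_sum_le_one (e : ℕ → Bool) (hr : r ∈ Ioo (0 : ℝ) 1) :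
    ∃ n : ℕ, ∀ z ∈ sphere (0 : ℂ) |r|, |(signedSeries e z).re -
      ∑ j ∈ Finset.range n, (boolSign (e j) * dyadicBlock j z).re| ≤ 1 := by
  have hunif := tendstoUniformlyOn_tsum_nat (f := fun j z => boolSign (e j) * dyadicBlock j z)
    (s := sphere (0 : ℂ) |r|) (summable_pow_mul_inv_one_sub hr.1.le hr.2) fun j z hz =>
      norm_boolSign_mul_dyadicBlock_le hr.2
        ((mem_sphere_zero_iff_norm.1 hz).trans (abs_of_pos hr.1)).le _ j
  obtain ⟨n, hn⟩ := (Metric.tendstoUniformlyOn_iff.1 hunif 1 one_pos).exists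
  refine ⟨n, fun z hz => ?_⟩
  rw [← re_sum, ← sub_re]
  refine (abs_re_le_norm _).trans ?_
  rw [← dist_eq_norm]
  exact (hn z hz).le

lemma exists_circMeanR_re_signedSeries_le {p : ℝ} (hp0 : 0 < p) (hp1 : p < 1) :
    ∃ C : ℝ, ∀ e : ℕ → Bool, ∀ r ∈ Ioo (0 : ℝ) 1,
      circMeanR p (fun z => (signedSeries e z).re) r ≤ C := by
  obtain ⟨C, hC⟩ := exists_sum_circMeanR_re_dyadicBlock_le hp0 hp1
  refine ⟨C + 1, fun e r hr => ?_⟩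
  have hsub := sphere_abs_subset_unitBall hr
  have hterm : ∀ j, ContinuousOn (fun z => (boolSign (e j) * dyadicBlock j z).re)
      (sphere 0 |r|) := fun j => (continuousOn_re_boolSign_mul_dyadicBlock _ j).mono hsub
  obtain ⟨n, hn⟩ := exists_forall_abs_re_signedSeries_sub_sum_le_one e hr
  have hpartial : ContinuousOn (fun z => ∑ j ∈ Finset.range n,
      (boolSign (e j) * dyadicBlock j z).re) (sphere 0 |r|) :=
    continuousOn_finsetSum _ fun j _ => hterm j
  have hrest := ((continuousOn_re_signedSeries e).mono hsub).fun_sub hpartial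
  have hsum : circMeanR p (fun z => ∑ j ∈ Finset.range n,
      (boolSign (e j) * dyadicBlock j z).re) r ≤ C := by
    refine (circMeanR_sum_le hp0 hp1.le fun j _ => hterm j).trans ?_
    simpa only [circMeanR, abs_re_boolSign_mul] using hC r hr n
  have hsmall := circMeanR_le_rpow_of_forall_abs_le hp0.le hrest hn
  rw [Real.one_rpow] at hsmall
  have hadd := circMeanR_add_le hp0.le hp1.le hpartial hrest
  simp only [add_sub_cancel] at hadd
  linarith

lemma continuous_circMeanR_im_signedSeries {q : ℝ} (hq : 0 ≤ q) (hr : r ∈ Ioo (0 : ℝ) 1) :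
    Continuous fun e : ℕ → Bool => circMeanR q (fun z => (signedSeries e z).im) r := by
  have hnorm : ∀ θ : ℝ, ‖(r : ℂ) * exp (θ * I)‖ = r := fun θ => by
    rw [norm_mul, norm_exp_ofReal_mul_I, mul_one, norm_real, Real.norm_of_nonneg hr.1.le]
  have hpoint : Continuous fun x : (ℕ → Bool) × ℝ => (r : ℂ) * exp (x.2 * I) := by fun_prop
  have hseries : Continuous fun x : (ℕ → Bool) × ℝ =>
      signedSeries x.1 ((r : ℂ) * exp (x.2 * I)) := by
    refine continuous_tsum (fun j => ?_) (summable_pow_mul_inv_one_sub hr.1.le hr.2)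
      fun j x => norm_boolSign_mul_dyadicBlock_le hr.2 (hnorm x.2).le _ j
    have hsign : Continuous boolSign := continuous_of_discreteTopology
    refine (hsign.comp ((continuous_apply j).comp continuous_fst)).mul
      ((differentiableOn_dyadicBlock j).continuousOn.comp_continuous hpoint fun x => ?_)
    exact mem_ball_zero_iff.2 ((hnorm x.2).trans_lt hr.2)
  exact continuous_const.mul
    (intervalIntegral.continuous_parametric_intervalIntegral_of_continuous'
      ((continuous_im.comp hseries).abs.rpow_const fun _ => Or.inr hq) _ _)

end SignedSeries

/-! ### Khinchine's inequality -/

/-- The sum of `± a j` over `j ∈ s`, with sign `-` for `j ∈ A`; summing over `A ∈ s.powerset` plays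
the role of the expectation over independent random signs. -/
def signedSum {ι E : Type*} [DecidableEq ι] [AddCommGroup E] (s A : Finset ι) (a : ι → E) : E :=
  ∑ j ∈ s, if j ∈ A then -a j else a j

section Khinchine

variable {ι E : Type*} [DecidableEq ι]

lemma sum_powerset_insert_signedSum [AddCommGroup E] {M : Type*} [AddCommMonoid M] {s : Finset ι}
    {i : ι} (hi : i ∉ s) (a : ι → E) (c : E) (φ : E → M) :
    ∑ A ∈ (insert i s).powerset, φ (c + signedSum (insert i s) A a) =
      ∑ A ∈ s.powerset, (φ (c + signedSum s A a + a i) + φ (c + signedSum s A a - a i)) := by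
  rw [Finset.sum_powerset_insert hi, ← Finset.sum_add_distrib]
  refine Finset.sum_congr rfl fun A hA => ?_
  have hiA : i ∉ A := fun h => hi (Finset.mem_powerset.1 hA h)
  have hplus : signedSum (insert i s) A a = signedSum s A a + a i := by
    simp [signedSum, Finset.sum_insert hi, hiA, add_comm]
  have hminus : signedSum (insert i s) (insert i A) a = signedSum s A a - a i := by
    have hne : ∀ j ∈ s, j ≠ i := fun j hj => ne_of_mem_of_not_mem hj hi
    rw [signedSum, Finset.sum_insert hi, if_pos (Finset.mem_insert_self i A), neg_add_eq_sub]
    congr 1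
    exact Finset.sum_congr rfl fun j hj => by simp [hne j hj]
  rw [hplus, hminus, add_assoc, add_sub_assoc]

variable [NormedAddCommGroup E] [InnerProductSpace ℝ E]

lemma norm_add_pow_four_add_norm_sub_pow_four_le (x y : E) :
    ‖x + y‖ ^ 4 + ‖x - y‖ ^ 4 ≤ 2 * ‖x‖ ^ 4 + 12 * ‖x‖ ^ 2 * ‖y‖ ^ 2 + 2 * ‖y‖ ^ 4 := by
  have hcs : inner ℝ x y ^ 2 ≤ (‖x‖ * ‖y‖) ^ 2 :=
    sq_le_sq' (neg_le_of_abs_le (abs_real_inner_le_norm x y)) (real_inner_le_norm x y)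
  rw [show ‖x + y‖ ^ 4 = (‖x + y‖ ^ 2) ^ 2 by ring, show ‖x - y‖ ^ 4 = (‖x - y‖ ^ 2) ^ 2 by ring,
    norm_add_sq_real, norm_sub_sq_real]
  linarith

lemma sum_norm_add_signedSum_sq (s : Finset ι) (a : ι → E) (c : E) :
    ∑ A ∈ s.powerset, ‖c + signedSum s A a‖ ^ 2 =
      2 ^ s.card * (‖c‖ ^ 2 + ∑ j ∈ s, ‖a j‖ ^ 2) := by
  induction s using Finset.induction_on with
  | empty => simp [signedSum]
  | insert i s hi ih =>
    have hpar : ∀ x : E, ‖x + a i‖ ^ 2 + ‖x - a i‖ ^ 2 = 2 * ‖x‖ ^ 2 + 2 * ‖a i‖ ^ 2 := fun x => by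
      linarith [parallelogram_law_with_norm ℝ x (a i)]
    rw [sum_powerset_insert_signedSum hi a c (‖·‖ ^ 2), Finset.sum_congr rfl fun A _ => hpar _,
      Finset.sum_add_distrib, ← Finset.mul_sum, ih, Finset.sum_const, Finset.card_powerset,
      Finset.card_insert_of_notMem hi, Finset.sum_insert hi, nsmul_eq_mul]
    push_cast
    ring

lemma sum_norm_add_signedSum_pow_four_le (s : Finset ι) (a : ι → E) (c : E) :
    ∑ A ∈ s.powerset, ‖c + signedSum s A a‖ ^ 4 ≤
      3 * 2 ^ s.card * (‖c‖ ^ 2 + ∑ j ∈ s, ‖a j‖ ^ 2) ^ 2 := by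
  induction s using Finset.induction_on with
  | empty =>
    simp only [signedSum, Finset.powerset_empty, Finset.sum_singleton, Finset.sum_empty, add_zero,
      Finset.card_empty]
    nlinarith [pow_nonneg (norm_nonneg c) 4]
  | insert i s hi ih =>
    have hfour : 0 ≤ ‖a i‖ ^ 4 * 2 ^ s.card := by positivity
    calc ∑ A ∈ (insert i s).powerset, ‖c + signedSum (insert i s) A a‖ ^ 4
        ≤ ∑ A ∈ s.powerset, (2 * ‖c + signedSum s A a‖ ^ 4 +
            12 * ‖a i‖ ^ 2 * ‖c + signedSum s A a‖ ^ 2 + 2 * ‖a i‖ ^ 4) := by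
          rw [sum_powerset_insert_signedSum hi a c (‖·‖ ^ 4)]
          refine Finset.sum_le_sum fun A _ => ?_
          linarith [norm_add_pow_four_add_norm_sub_pow_four_le (c + signedSum s A a) (a i)]
      _ = 2 * ∑ A ∈ s.powerset, ‖c + signedSum s A a‖ ^ 4 +
            12 * ‖a i‖ ^ 2 * (2 ^ s.card * (‖c‖ ^ 2 + ∑ j ∈ s, ‖a j‖ ^ 2)) +
            2 * (‖a i‖ ^ 4 * 2 ^ s.card) := by
          rw [Finset.sum_add_distrib, Finset.sum_add_distrib, ← Finset.mul_sum, ← Finset.mul_sum,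
            sum_norm_add_signedSum_sq, Finset.sum_const, Finset.card_powerset, nsmul_eq_mul]
          push_cast
          ring
      _ ≤ 2 * (3 * 2 ^ s.card * (‖c‖ ^ 2 + ∑ j ∈ s, ‖a j‖ ^ 2) ^ 2) +
            12 * ‖a i‖ ^ 2 * (2 ^ s.card * (‖c‖ ^ 2 + ∑ j ∈ s, ‖a j‖ ^ 2)) +
            6 * (‖a i‖ ^ 4 * 2 ^ s.card) := by linarith
      _ = _ := by
          rw [Finset.card_insert_of_notMem hi, Finset.sum_insert hi]
          ring

lemma sq_le_rpow_mul_rpow_add_pow_four_div {q T x : ℝ} (hq : q ≤ 2) (hT : 0 < T) (hx : 0 ≤ x) :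
    x ^ 2 ≤ T ^ (1 - q / 2) * x ^ q + x ^ 4 / T := by
  rcases le_total (x ^ 2) T with hle | hge
  · refine le_add_of_le_of_nonneg ?_ (by positivity)
    rcases hx.eq_or_lt with rfl | hx
    · rw [zero_pow two_ne_zero]
      positivity
    calc x ^ 2 = (x ^ 2) ^ (1 - q / 2) * x ^ q := by
          rw [← Real.rpow_natCast_mul hx.le, ← Real.rpow_add hx, ← Real.rpow_natCast]
          push_cast
          ring_nf
      _ ≤ T ^ (1 - q / 2) * x ^ q := by
          gcongr
          linarith
  · refine le_add_of_nonneg_of_le (by positivity) ((le_div_iff₀ hT).2 ?_)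
    nlinarith [sq_nonneg x]

/- The fourth moment is comparable with the square of the second, so half of the second moment
comes from sums of norm at most `√(6V)`, where `V` is the second moment; there `‖·‖ ^ 2` is at most
`(6V) ^ (1 - q / 2) * ‖·‖ ^ q`. -/
lemma le_sum_norm_add_signedSum_rpow (s : Finset ι) (a : ι → E) (c : E) {q : ℝ} (hq0 : 0 < q)
    (hq2 : q ≤ 2) :
    2 ^ s.card * ((∑ j ∈ s, ‖a j‖ ^ 2) ^ (q / 2) / 12) ≤
      ∑ A ∈ s.powerset, ‖c + signedSum s A a‖ ^ q := by
  set V := ‖c‖ ^ 2 + ∑ j ∈ s, ‖a j‖ ^ 2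
  have hsumV : ∑ j ∈ s, ‖a j‖ ^ 2 ≤ 6 * V := by
    have hsum : 0 ≤ ∑ j ∈ s, ‖a j‖ ^ 2 := by positivity
    linarith [sq_nonneg ‖c‖]
  rcases (show 0 ≤ V by positivity).eq_or_lt with hV0 | hVpos
  · have hzero : ∑ j ∈ s, ‖a j‖ ^ 2 = 0 := le_antisymm (by linarith) (by positivity)
    rw [hzero, Real.zero_rpow (by positivity), zero_div, mul_zero]
    positivity
  have hsplit : 2 ^ s.card * V ≤ (6 * V) ^ (1 - q / 2) * ∑ A ∈ s.powerset,
      ‖c + signedSum s A a‖ ^ q + (∑ A ∈ s.powerset, ‖c + signedSum s A a‖ ^ 4) / (6 * V) := by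
    rw [← sum_norm_add_signedSum_sq, Finset.mul_sum, Finset.sum_div, ← Finset.sum_add_distrib]
    exact Finset.sum_le_sum fun A _ =>
      sq_le_rpow_mul_rpow_add_pow_four_div hq2 (by positivity) (norm_nonneg _)
  have hfourth : (∑ A ∈ s.powerset, ‖c + signedSum s A a‖ ^ 4) / (6 * V) ≤ 2 ^ s.card * V / 2 := by
    rw [div_le_iff₀ (by positivity)]
    exact (sum_norm_add_signedSum_pow_four_le s a c).trans_eq (by ring)
  have hpow : (6 * V) ^ (1 - q / 2) * (6 * V) ^ (q / 2) = 6 * V := by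
    rw [← Real.rpow_add (by positivity), sub_add_cancel, Real.rpow_one]
  calc 2 ^ s.card * ((∑ j ∈ s, ‖a j‖ ^ 2) ^ (q / 2) / 12)
      ≤ 2 ^ s.card * ((6 * V) ^ (q / 2) / 12) := by gcongr
    _ ≤ ∑ A ∈ s.powerset, ‖c + signedSum s A a‖ ^ q := by
        refine le_of_mul_le_mul_left ?_ (show 0 < (6 * V) ^ (1 - q / 2) by positivity)
        linear_combination hsplit + hfourth + (2 ^ s.card / 12) * hpow

end Khinchine

/-! ### Signs with conjugate in no Hardy space -/

section BadSigns

variable {q r : ℝ}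

lemma circleAverage_norm_rpow_le_circMeanR_re_add_im {f : ℂ → ℂ} (hq0 : 0 ≤ q) (hq1 : q ≤ 1)
    (hf : ContinuousOn f (sphere 0 |r|)) :
    Real.circleAverage (fun z => ‖f z‖ ^ q) 0 r ≤
      circMeanR q (fun z => (f z).re) r + circMeanR q (fun z => (f z).im) r := by
  have hre : CircleIntegrable (fun z => |(f z).re| ^ q) 0 r :=
    circleIntegrable_abs_rpow hq0 (continuous_re.comp_continuousOn hf)
  have him : CircleIntegrable (fun z => |(f z).im| ^ q) 0 r :=
    circleIntegrable_abs_rpow hq0 (continuous_im.comp_continuousOn hf)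
  rw [circMeanR_eq_circleAverage, circMeanR_eq_circleAverage,
    ← Real.circleAverage_fun_add hre him]
  refine Real.circleAverage_mono
    (hf.norm.rpow_const fun _ _ => Or.inr hq0).circleIntegrable' (hre.add him) fun z _ => ?_
  calc ‖f z‖ ^ q ≤ (|(f z).re| + |(f z).im|) ^ q := by
        gcongr
        exact norm_le_abs_re_add_abs_im _
    _ ≤ |(f z).re| ^ q + |(f z).im| ^ q :=
        Real.rpow_add_le_add_rpow (abs_nonneg _) (abs_nonneg _) hq0 hq1

lemma signedSeries_piecewise (e : ℕ → Bool) (s A : Finset ℕ) {z : ℂ} (hz : ‖z‖ < 1) :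
    signedSeries (s.piecewise (fun j => decide (j ∉ A)) e) z =
      (∑' j : ((s : Set ℕ)ᶜ : Set ℕ), boolSign (e j) * dyadicBlock j z) +
        signedSum s A (dyadicBlock · z) := by
  have hsum : Summable fun j => boolSign (s.piecewise (fun j => decide (j ∉ A)) e j) *
      dyadicBlock j z :=
    .of_norm_bounded (summable_pow_mul_inv_one_sub (norm_nonneg z) hz) fun j =>
      norm_boolSign_mul_dyadicBlock_le hz le_rfl _ j
  rw [signedSeries, ← hsum.sum_add_tsum_compl (s := s), add_comm]
  congr 1
  · exact tsum_congr fun j => by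
      rw [Finset.piecewise_eq_of_notMem _ _ _ (Finset.mem_coe.not.1 j.2)]
  · refine Finset.sum_congr rfl fun j hj => ?_
    rw [Finset.piecewise_eq_of_mem _ _ _ hj]
    by_cases hA : j ∈ A <;> simp [boolSign, hA]

lemma card_div_le_sum_norm_dyadicBlock_sq {s : Finset ℕ} {m : ℕ} (hs : ∀ j ∈ s, j ≤ m) {z : ℂ}
    (hz : ‖z‖ < 1) (hzm : 1 / 2 ≤ ‖z‖ ^ 2 ^ m) :
    (s.card : ℝ) / 16 ≤ ∑ j ∈ s, ‖dyadicBlock j z‖ ^ 2 := by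
  have hterm : ∀ j ∈ s, (1 / 16 : ℝ) ≤ ‖dyadicBlock j z‖ ^ 2 := fun j hj => by
    have hpow : ‖z‖ ^ 2 ^ m ≤ ‖z‖ ^ 2 ^ j :=
      pow_le_pow_of_le_one (norm_nonneg z) hz.le (Nat.pow_le_pow_right two_pos (hs j hj))
    have hquarter : (1 / 4 : ℝ) ≤ ‖dyadicBlock j z‖ := by
      linarith [le_norm_dyadicBlock hz j]
    calc (1 / 16 : ℝ) = (1 / 4) ^ 2 := by norm_num
      _ ≤ ‖dyadicBlock j z‖ ^ 2 := by gcongr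
  calc (s.card : ℝ) / 16 = s.card • (1 / 16 : ℝ) := by rw [nsmul_eq_mul]; ring
    _ ≤ _ := Finset.card_nsmul_le_sum s _ _ hterm

lemma le_sum_circleAverage_norm_signedSeries_rpow (hq0 : 0 < q) (hq2 : q ≤ 2) (e : ℕ → Bool)
    {s : Finset ℕ} {m : ℕ} (hs : ∀ j ∈ s, j ≤ m) (hr : r ∈ Ioo (0 : ℝ) 1)
    (hrm : 1 / 2 ≤ r ^ 2 ^ m) :
    2 ^ s.card * (((s.card : ℝ) / 16) ^ (q / 2) / 12) ≤ ∑ A ∈ s.powerset, Real.circleAverage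
      (fun z => ‖signedSeries (s.piecewise (fun j => decide (j ∉ A)) e) z‖ ^ q) 0 r := by
  have hsub := sphere_abs_subset_unitBall hr
  have hint : ∀ e', CircleIntegrable (fun z => ‖signedSeries e' z‖ ^ q) 0 r := fun e' =>
    (((differentiableOn_signedSeries e').continuousOn.mono hsub).norm.rpow_const
      fun _ _ => Or.inr hq0.le).circleIntegrable'
  rw [← Real.circleAverage_fun_sum fun A _ => hint _,
    ← Real.circleAverage_const (2 ^ s.card * (((s.card : ℝ) / 16) ^ (q / 2) / 12)) (0 : ℂ) r]
  refine Real.circleAverage_mono (circleIntegrable_const _ _ _)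
    (CircleIntegrable.fun_sum _ fun A _ => hint _) fun z hz => ?_
  have hz1 : ‖z‖ < 1 := mem_ball_zero_iff.1 (hsub hz)
  have hzr : ‖z‖ = r := (mem_sphere_zero_iff_norm.1 hz).trans (abs_of_pos hr.1)
  simp only [signedSeries_piecewise e s _ hz1]
  refine le_trans ?_ (le_sum_norm_add_signedSum_rpow s (dyadicBlock · z) _ hq0 hq2)
  gcongr
  exact card_div_le_sum_norm_dyadicBlock_sq hs hz1 (hzr ▸ hrm)

lemma exists_half_le_pow {n : ℕ} (hn : n ≠ 0) : ∃ r ∈ Ioo (0 : ℝ) 1, 1 / 2 ≤ r ^ n := by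
  refine ⟨(1 / 2) ^ (n : ℝ)⁻¹, ⟨by positivity, ?_⟩, ?_⟩
  · exact Real.rpow_lt_one (by norm_num) (by norm_num) (by positivity)
  · rw [Real.rpow_inv_natCast_pow (by norm_num) hn]

lemma exists_lt_circMeanR_im_signedSeries_of_eqOn (hq0 : 0 < q) (hq1 : q < 1) (e : ℕ → Bool)
    (I : Finset ℕ) (C : ℝ) :
    ∃ e' : ℕ → Bool, (∀ j ∈ I, e' j = e j) ∧ ∃ r ∈ Ioo (0 : ℝ) 1,
      C < circMeanR q (fun z => (signedSeries e' z).im) r := by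
  by_contra! hbdd
  obtain ⟨D, hD⟩ := exists_circMeanR_re_signedSeries_le hq0 hq1
  obtain ⟨n, hn⟩ : ∃ n : ℕ, D + C < ((n : ℝ) / 16) ^ (q / 2) / 12 :=
    ((((tendsto_rpow_atTop (half_pos hq0)).comp
      (tendsto_natCast_atTop_atTop.atTop_div_const (by norm_num))).atTop_div_const
      (by norm_num)).eventually_gt_atTop _).exists
  obtain ⟨s, hsI, hcard⟩ := Infinite.exists_superset_card_eq I (I.card + n) (by simp)
  obtain ⟨r, hr, hrm⟩ := exists_half_le_pow (n := 2 ^ (s.sup id)) (by positivity)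
  set t := s \ I
  have htcard : t.card = n := by
    rw [Finset.card_sdiff_of_subset hsI, hcard, Nat.add_sub_cancel_left]
  have hupper : ∀ A ∈ t.powerset, Real.circleAverage
      (fun z => ‖signedSeries (t.piecewise (fun j => decide (j ∉ A)) e) z‖ ^ q) 0 r ≤ D + C :=
    fun A _ => (circleAverage_norm_rpow_le_circMeanR_re_add_im hq0.le hq1.le
      ((differentiableOn_signedSeries _).continuousOn.mono
        (sphere_abs_subset_unitBall hr))).trans (add_le_add (hD _ r hr) (hbdd _ (fun j hj =>
          Finset.piecewise_eq_of_notMem _ _ _ fun h => (Finset.mem_sdiff.1 h).2 hj) r hr))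
  have hlower := le_sum_circleAverage_norm_signedSeries_rpow (s := t) hq0 (by linarith) e
    (fun j hj => Finset.le_sup (f := id) (Finset.sdiff_subset hj)) hr hrm
  have hle := hlower.trans (Finset.sum_le_card_nsmul _ _ _ hupper)
  rw [Finset.card_powerset, nsmul_eq_mul, htcard, Nat.cast_pow, Nat.cast_ofNat] at hle
  exact hn.not_ge (le_of_mul_le_mul_left hle (by positivity))

lemma isClosed_setOf_circMeanR_im_signedSeries_le (hq : 0 ≤ q) (C : ℝ) :
    IsClosed {e : ℕ → Bool | ∀ r ∈ Ioo (0 : ℝ) 1,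
      circMeanR q (fun z => (signedSeries e z).im) r ≤ C} := by
  simp only [ofPred_forall]
  exact isClosed_biInter fun r hr =>
    isClosed_le (continuous_circMeanR_im_signedSeries hq hr) continuous_const

lemma interior_setOf_circMeanR_im_signedSeries_le (hq0 : 0 < q) (hq1 : q < 1) (C : ℝ) :
    interior {e : ℕ → Bool | ∀ r ∈ Ioo (0 : ℝ) 1,
      circMeanR q (fun z => (signedSeries e z).im) r ≤ C} = ∅ := by
  refine eq_empty_of_forall_notMem fun e he => ?_
  obtain ⟨I, u, hu, hsub⟩ := isOpen_pi_iff.1 isOpen_interior e he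
  obtain ⟨e', heq, r, hr, hlt⟩ := exists_lt_circMeanR_im_signedSeries_of_eqOn hq0 hq1 e I C
  have hmem := interior_subset (hsub fun j hj => heq j hj ▸ (hu j hj).2)
  exact hlt.not_ge (hmem r hr)

lemma exists_signedSeries_not_hardyBounded_im :
    ∃ e : ℕ → Bool, ∀ q : ℝ, 0 < q → ¬ HardyBounded q (fun z => (signedSeries e z).im) := by
  by_contra! hbdd
  have hclosed : ∀ k : ℕ × ℕ, IsClosed {e : ℕ → Bool | ∀ r ∈ Ioo (0 : ℝ) 1,
      circMeanR (1 / ((k.1 : ℝ) + 2)) (fun z => (signedSeries e z).im) r ≤ k.2} := fun k =>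
    isClosed_setOf_circMeanR_im_signedSeries_le (by positivity) _
  have hcover : ⋃ k : ℕ × ℕ, {e : ℕ → Bool | ∀ r ∈ Ioo (0 : ℝ) 1,
      circMeanR (1 / ((k.1 : ℝ) + 2)) (fun z => (signedSeries e z).im) r ≤ k.2} = univ := by
    refine eq_univ_of_forall fun e => ?_
    obtain ⟨q, hq, hbdd⟩ := hbdd e
    obtain ⟨n, hn⟩ := exists_nat_one_div_lt hq
    have hnq : 1 / ((n : ℝ) + 2) ≤ q := le_trans (by gcongr; norm_num) hn.le
    obtain ⟨C, hC⟩ := hbdd.anti (by positivity) hnq (continuousOn_im_signedSeries e)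
    obtain ⟨m, hm⟩ := exists_nat_ge C
    exact mem_iUnion.2 ⟨(n, m), fun r hr => (hC r hr).trans hm⟩
  obtain ⟨k, hk⟩ := nonempty_interior_of_iUnion_of_closed hclosed hcover
  refine hk.ne_empty (interior_setOf_circMeanR_im_signedSeries_le (by positivity) ?_ _)
  rw [div_lt_one (by positivity)]
  linarith [Nat.cast_nonneg (α := ℝ) k.1]

lemma exists_harmVp_not_hardyBounded_im {p : ℝ} (hp0 : 0 < p) (hp1 : p < 1) :
    ∃ h : HarmVp p, ∀ q : ℝ, 0 < q → ¬ HardyBounded q (fun z => (h.1 z).im) := by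
  obtain ⟨e, he⟩ := exists_signedSeries_not_hardyBounded_im
  obtain ⟨C, hC⟩ := exists_circMeanR_re_signedSeries_le hp0 hp1
  exact ⟨⟨signedSeries e, differentiableOn_signedSeries e, by rw [signedSeries_zero, zero_im],
    C, hC e⟩, he⟩

end BadSigns

/-- Remark 3.8: for fixed `0 < p < 1`, the set of `u ∈ h^p` whose normalized harmonic
conjugate `ũ = Im f` belongs to no `h^q` with `q > 0` is a `G_δ` dense subset of
`(h^p, δ_p)`. -/
theorem conjugate_in_no_hq_generic_hp (p : ℝ) (hp0 : 0 < p) (hp1 : p < 1) :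
    @IsGδ (HarmVp p) (ballTopology (harmDistP p))
      {f : HarmVp p | ∀ q : ℝ, 0 < q → ∀ C : ℝ, ∃ r ∈ Set.Ioo (0 : ℝ) 1,
        C < circMeanR q (fun z => (f.1 z).im) r} ∧
    @Dense (HarmVp p) (ballTopology (harmDistP p))
      {f : HarmVp p | ∀ q : ℝ, 0 < q → ∀ C : ℝ, ∃ r ∈ Set.Ioo (0 : ℝ) 1,
        C < circMeanR q (fun z => (f.1 z).im) r} := by
  have := Fact.mk hp0
  have := Fact.mk hp1.le
  have hset : {f : HarmVp p | ∀ q : ℝ, 0 < q → ∀ C : ℝ, ∃ r ∈ Set.Ioo (0 : ℝ) 1,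
      C < circMeanR q (fun z => (f.1 z).im) r} =
      {f : HarmVp p | ∀ q : ℝ, 0 < q → ¬ HardyBounded q (fun z => (f.1 z).im)} := by
    simp only [HardyBounded, not_exists, not_forall, not_le, exists_prop]
  have htop : ballTopology (harmDistP p) = (inferInstance : TopologicalSpace (HarmVp p)) :=
    ballTopology_dist
  obtain ⟨h, hh⟩ := exists_harmVp_not_hardyBounded_im hp0 hp1
  rw [hset, htop]
  exact ⟨HarmVp.isGδ_setOf_not_hardyBounded_im, HarmVp.dense_setOf_not_hardyBounded_im hh⟩

end
end

section
/- Let (f_m)_{m≥1} and f be holomorphic functions on the open unit disc 𝔻 with Im f_m(0) = 0 for all m and Im f(0) = 0. If Re f_m → Re f uniformly on every compact subset of 𝔻, then f_m → f uniformly on every compact subset of 𝔻 (in particular Im f_m → Im f uniformly on compact subsets of 𝔻). -/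
open Complex Metric

open Filter Topology

/-!
By the Borel–Carathéodory inequality, a holomorphic function whose real part is small on a ball
has small oscillation on the concentric ball of half the radius. Applied to `F i - g`, this spreads
convergence of the imaginary parts at one point of the half ball to uniform convergence on all of
it, and connectedness carries convergence at one point to the whole domain.
-/

section BorelCaratheodory

variable {f : ℂ → ℂ} {c z w : ℂ} {M R : ℝ}

lemma norm_sub_center_le_of_re_sub_center_le (hM : 0 < M) (hf : DifferentiableOn ℂ f (ball c R))
    (hre : ∀ w ∈ ball c R, (f w - f c).re ≤ M) (hz : z ∈ ball c R) :
    ‖f z - f c‖ ≤ 2 * M * ‖z - c‖ / (R - ‖z - c‖) := by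
  have hmaps : Set.MapsTo (fun w => c + w) (ball 0 R) (ball c R) := fun w hw => by
    simpa using hw
  have hdiff : DifferentiableOn ℂ (fun w => f (c + w) - f c) (ball 0 R) :=
    (hf.comp (by fun_prop) hmaps).sub_const (f c)
  simpa using borelCaratheodory_zero hM hdiff (fun w hw => hre _ (hmaps hw)) (pos_of_mem_ball hz)
    (z := z - c) (by simpa [dist_eq_norm] using hz) (by simp)

lemma norm_sub_center_le_of_abs_re_le (hM : 0 < M) (hf : DifferentiableOn ℂ f (ball c R))
    (hR : 0 < R) (hre : ∀ w ∈ ball c R, |(f w).re| ≤ M) (hz : z ∈ closedBall c (R / 2)) :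
    ‖f z - f c‖ ≤ 4 * M := by
  have hre_sub : ∀ w ∈ ball c R, (f w - f c).re ≤ 2 * M := fun w hw => by
    rw [sub_re]
    linarith [(abs_le.1 (hre w hw)).2, (abs_le.1 (hre c (mem_ball_self hR))).1]
  have hzc : ‖z - c‖ ≤ R / 2 := mem_closedBall_iff_norm.1 hz
  calc ‖f z - f c‖
    _ ≤ 2 * (2 * M) * ‖z - c‖ / (R - ‖z - c‖) :=
      norm_sub_center_le_of_re_sub_center_le (by positivity) hf hre_sub
        (closedBall_subset_ball (half_lt_self hR) hz)
    _ ≤ 4 * M := by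
      rw [div_le_iff₀ (by linarith)]
      nlinarith

lemma norm_le_add_abs_im_of_abs_re_le (hM : 0 < M) (hf : DifferentiableOn ℂ f (ball c R))
    (hR : 0 < R) (hre : ∀ w ∈ ball c R, |(f w).re| ≤ M) (hz : z ∈ closedBall c (R / 2))
    (hw : w ∈ closedBall c (R / 2)) :
    ‖f z‖ ≤ 9 * M + |(f w).im| := by
  have hzc : ‖f z - f c‖ ≤ 4 * M := norm_sub_center_le_of_abs_re_le hM hf hR hre hz
  have hwc : ‖f c - f w‖ ≤ 4 * M :=
    norm_sub_rev (f c) (f w) ▸ norm_sub_center_le_of_abs_re_le hM hf hR hre hw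
  have hw_norm : ‖f w‖ ≤ M + |(f w).im| := (norm_le_abs_re_add_abs_im _).trans <| by
    gcongr
    exact hre w (closedBall_subset_ball (half_lt_self hR) hw)
  calc ‖f z‖ = ‖(f z - f c) + (f c - f w) + f w‖ := by rw [sub_add_sub_cancel, sub_add_cancel]
    _ ≤ ‖f z - f c‖ + ‖f c - f w‖ + ‖f w‖ := norm_add₃_le
    _ ≤ 9 * M + |(f w).im| := by linarith

end BorelCaratheodory

lemma exists_ball_subset_tendstoUniformlyOn {ι α β : Type*} [PseudoMetricSpace α] [ProperSpace α]
    [UniformSpace β] {l : Filter ι} {F : ι → α → β} {g : α → β} {U : Set α} {x : α}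
    (hU : IsOpen U) (hF : TendstoLocallyUniformlyOn F g l U) (hx : x ∈ U) :
    ∃ R > 0, ball x R ⊆ U ∧ TendstoUniformlyOn F g l (ball x R) := by
  obtain ⟨R, hR, hRU⟩ := nhds_basis_closedBall.mem_iff.1 (hU.mem_nhds hx)
  have hunif : TendstoUniformlyOn F g l (closedBall x R) :=
    (tendstoLocallyUniformlyOn_iff_forall_isCompact hU).1 hF _ hRU (isCompact_closedBall x R)
  exact ⟨R, hR, ball_subset_closedBall.trans hRU, hunif.mono ball_subset_closedBall⟩

section HarmonicConjugates

variable {ι : Type*} {l : Filter ι} {F : ι → ℂ → ℂ} {g : ℂ → ℂ} {U : Set ℂ} {c w : ℂ} {R : ℝ}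

lemma tendstoUniformlyOn_closedBall_of_re_of_im_apply (hR : 0 < R)
    (hF : ∀ᶠ i in l, DifferentiableOn ℂ (F i) (ball c R)) (hg : DifferentiableOn ℂ g (ball c R))
    (hre : TendstoUniformlyOn (fun i z => (F i z).re) (fun z => (g z).re) l (ball c R))
    (hw : w ∈ closedBall c (R / 2)) (him : Tendsto (fun i => (F i w).im) l (𝓝 (g w).im)) :
    TendstoUniformlyOn F g l (closedBall c (R / 2)) := by
  rw [Metric.tendstoUniformlyOn_iff] at hre ⊢
  intro ε hε
  have hδ : 0 < ε / 10 := by positivity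
  filter_upwards [hF, hre _ hδ, Metric.tendsto_nhds.1 him _ hδ] with i hFi hre_i him_i z hz
  have hre_sub : ∀ x ∈ ball c R, |(g x - F i x).re| ≤ ε / 10 := fun x hx => by
    simpa only [Real.dist_eq, sub_re] using (hre_i x hx).le
  have him_sub : |(g w - F i w).im| < ε / 10 := by
    rwa [sub_im, abs_sub_comm, ← Real.dist_eq]
  calc dist (g z) (F i z) = ‖g z - F i z‖ := dist_eq_norm _ _
    _ ≤ 9 * (ε / 10) + |(g w - F i w).im| :=
      norm_le_add_abs_im_of_abs_re_le hδ (hg.sub hFi) hR hre_sub hz hw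
    _ < ε := by linarith

lemma exists_closedBall_tendstoUniformlyOn_of_im_apply (hU : IsOpen U)
    (hF : ∀ᶠ i in l, DifferentiableOn ℂ (F i) U) (hg : DifferentiableOn ℂ g U)
    (hre : TendstoLocallyUniformlyOn (fun i z => (F i z).re) (fun z => (g z).re) l U)
    (hc : c ∈ U) :
    ∃ r > 0, ∀ w ∈ closedBall c r, Tendsto (fun i => (F i w).im) l (𝓝 (g w).im) →
      TendstoUniformlyOn F g l (closedBall c r) := by
  obtain ⟨R, hR, hRU, hunif⟩ := exists_ball_subset_tendstoUniformlyOn hU hre hc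
  exact ⟨R / 2, half_pos hR, fun w hw him =>
    tendstoUniformlyOn_closedBall_of_re_of_im_apply hR (hF.mono fun i hi => hi.mono hRU)
      (hg.mono hRU) hunif hw him⟩

lemma tendsto_im_of_isPreconnected (hU : IsOpen U) (hconn : IsPreconnected U)
    (hF : ∀ᶠ i in l, DifferentiableOn ℂ (F i) U) (hg : DifferentiableOn ℂ g U)
    (hre : TendstoLocallyUniformlyOn (fun i z => (F i z).re) (fun z => (g z).re) l U)
    (hc : c ∈ U) (him : Tendsto (fun i => (F i c).im) l (𝓝 (g c).im)) (hw : w ∈ U) :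
    Tendsto (fun i => (F i w).im) l (𝓝 (g w).im) := by
  let ImTendsto (z : ℂ) : Prop := Tendsto (fun i => (F i z).im) l (𝓝 (g z).im)
  refine hconn.induction₂' (fun x y => ImTendsto x → ImTendsto y) (fun x hx => ?_)
    (fun _ _ _ _ _ _ hxy hyz => hyz ∘ hxy) hc hw him
  obtain ⟨r, hr, hspread⟩ := exists_closedBall_tendstoUniformlyOn_of_im_apply hU hF hg hre hx
  have himp : ∀ y ∈ closedBall x r, ∀ z ∈ closedBall x r, ImTendsto y → ImTendsto z :=
    fun y hy z hz h => (hspread y hy h).im.tendsto_at hz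
  have hx_mem : x ∈ closedBall x r := mem_closedBall_self hr.le
  filter_upwards [mem_nhdsWithin_of_mem_nhds (closedBall_mem_nhds x hr)] with y hy
  exact ⟨himp x hx_mem y hy, himp y hy x hx_mem⟩

theorem conjugates_converge_uniformly_on_compacts_general (hU : IsOpen U)
    (hconn : IsPreconnected U) (hF : ∀ᶠ i in l, DifferentiableOn ℂ (F i) U)
    (hg : DifferentiableOn ℂ g U)
    (hre : TendstoLocallyUniformlyOn (fun i z => (F i z).re) (fun z => (g z).re) l U)
    (hc : c ∈ U) (him : Tendsto (fun i => (F i c).im) l (𝓝 (g c).im)) :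
    TendstoLocallyUniformlyOn F g l U := by
  refine tendstoLocallyUniformlyOn_of_forall_exists_nhds fun z hz => ?_
  obtain ⟨r, hr, hspread⟩ := exists_closedBall_tendstoUniformlyOn_of_im_apply hU hF hg hre hz
  exact ⟨closedBall z r, mem_nhdsWithin_of_mem_nhds (closedBall_mem_nhds z hr),
    hspread z (mem_closedBall_self hr.le)
      (tendsto_im_of_isPreconnected hU hconn hF hg hre hc him hz)⟩

end HarmonicConjugates

/-- The Claim in Proposition 3.1: if holomorphic functions `f_m` on the unit disc, all
normalized by `Im f_m(0) = 0` (as is `f`), have real parts converging uniformly on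
compacta of `𝔻` to `Re f`, then `f_m → f` uniformly on compacta of `𝔻` (in particular
the normalized harmonic conjugates `Im f_m` converge uniformly on compacta to `Im f`). -/
theorem conjugates_converge_uniformly_on_compacts (f : ℕ → ℂ → ℂ) (g : ℂ → ℂ)
    (hf : ∀ m : ℕ, DifferentiableOn ℂ (f m) (Metric.ball (0 : ℂ) 1))
    (hg : DifferentiableOn ℂ g (Metric.ball (0 : ℂ) 1))
    (hf0 : ∀ m : ℕ, (f m 0).im = 0) (hg0 : (g 0).im = 0)
    (hre : ∀ K ⊆ Metric.ball (0 : ℂ) 1, IsCompact K →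
      TendstoUniformlyOn (fun m z => (f m z).re) (fun z => (g z).re) Filter.atTop K) :
    ∀ K ⊆ Metric.ball (0 : ℂ) 1, IsCompact K →
      TendstoUniformlyOn (fun m z => f m z) g Filter.atTop K := by
  rw [← tendstoLocallyUniformlyOn_iff_forall_isCompact isOpen_ball] at hre ⊢
  exact conjugates_converge_uniformly_on_compacts_general isOpen_ball
    (convex_ball 0 1).isPreconnected (.of_forall hf) hg hre (mem_ball_self one_pos)
    (by simp [hf0, hg0])
end
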